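/- arXiv:1509.02303 — 3 statements merged into one kernel-verified Lean document; each statement's English description precedes it below -/
import Mathlib

section
/- For any finite set Γ ⊂ ℤ² and any state φ : Γ → ℤ≥0, every sequence of legal topplings starting from φ terminates after finitely many steps in a stable state, and this final stable state is the same for every relaxation of φ (it depends only on φ, not on the order in which legal topplings are applied). -/
open Filter
open scoped Pointwise Topology

/-! ## The abelian sandpile model on a finite subset `Γ` of `ℤ²` -/

/-- Lattice sites. -/
abbrev V : Type := ℤ × ℤ

/-- The four lattice neighbours of `v`. -/
def nbrs (v : V) : Finset V :=
  {(v.1 + 1, v.2), (v.1 - 1, v.2), (v.1, v.2 + 1), (v.1, v.2 - 1)}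

/-- A sandpile state on `Γ`: a nonnegative integer valued function, regarded as a
function on all of `ℤ²` vanishing outside `Γ`. -/
def IsState (Γ : Set V) (φ : V → ℤ) : Prop :=
  (∀ v, 0 ≤ φ v) ∧ ∀ v ∉ Γ, φ v = 0

open Classical in
/-- The toppling operator at `v ∈ Γ`: `T_v φ = φ - 4δ_v + ∑_{w ∈ n(v) ∩ Γ} δ_w`. -/
noncomputable def toppleAt (Γ : Set V) (v : V) (φ : V → ℤ) : V → ℤ :=
  fun w => φ w - (if w = v then 4 else 0) + (if w ∈ nbrs v ∧ w ∈ Γ then 1 else 0)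

/-- A state is stable if it is at most `3` everywhere on `Γ`. -/
def StableState (Γ : Set V) (φ : V → ℤ) : Prop := ∀ v ∈ Γ, φ v ≤ 3

/-- One legal toppling step: topple some `v ∈ Γ` with `φ v ≥ 4`. -/
def LegalStep (Γ : Set V) (φ ψ : V → ℤ) : Prop :=
  ∃ v ∈ Γ, 4 ≤ φ v ∧ ψ = toppleAt Γ v φ

/-- `ρ 0, ρ 1, …, ρ m` is a relaxation of `φ`: a sequence of legal topplings
ending in a stable state. -/
def IsRelaxation (Γ : Set V) (φ : V → ℤ) (m : ℕ) (ρ : ℕ → V → ℤ) : Prop :=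
  ρ 0 = φ ∧ (∀ i < m, LegalStep Γ (ρ i) (ρ (i + 1))) ∧ StableState Γ (ρ m)

/-- `ψ` is the result of some relaxation of `φ`. -/
def Relaxes (Γ : Set V) (φ ψ : V → ℤ) : Prop :=
  ∃ m ρ, IsRelaxation Γ φ m ρ ∧ ρ m = ψ

/-!
The function `(B + 1) ^ 2 - v.1 ^ 2` has discrete Laplacian `-2`, so its positive part is strictly
superharmonic on the strip `|v.1| ≤ B`. Weighting the positive part of a configuration by it gives
a nonnegative integer which every legal toppling strictly decreases, hence termination. As
topplings commute and toppling one site never lowers the height of another, legal steps have the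
diamond property, and Church–Rosser makes the stable state unique.
-/

section Diamond

open Relation

variable {Γ : Set V} {φ : V → ℤ}

lemma toppleAt_comm (Γ : Set V) (v w : V) (φ : V → ℤ) :
    toppleAt Γ v (toppleAt Γ w φ) = toppleAt Γ w (toppleAt Γ v φ) := by
  funext x
  simp only [toppleAt]
  ring

lemma le_toppleAt_of_ne (Γ : Set V) {v w : V} (hwv : w ≠ v) (φ : V → ℤ) :
    φ w ≤ toppleAt Γ v φ w := by
  simp only [toppleAt, if_neg hwv]
  split_ifs <;> omega

lemma LegalStep.diamond {ψ₁ ψ₂ : V → ℤ} (h₁ : LegalStep Γ φ ψ₁) (h₂ : LegalStep Γ φ ψ₂) :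
    ψ₁ = ψ₂ ∨ ∃ χ, LegalStep Γ ψ₁ χ ∧ LegalStep Γ ψ₂ χ := by
  obtain ⟨v, hv, hφv, rfl⟩ := h₁
  obtain ⟨w, hw, hφw, rfl⟩ := h₂
  obtain rfl | hvw := eq_or_ne v w
  · exact .inl rfl
  · refine .inr ⟨toppleAt Γ w (toppleAt Γ v φ), ⟨w, hw, ?_, rfl⟩, ⟨v, hv, ?_, toppleAt_comm ..⟩⟩
    · exact hφw.trans (le_toppleAt_of_ne Γ hvw.symm φ)
    · exact hφv.trans (le_toppleAt_of_ne Γ hvw φ)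

lemma stableState_iff_forall_not_legalStep :
    StableState Γ φ ↔ ∀ ψ, ¬ LegalStep Γ φ ψ := by
  refine ⟨fun hφ ψ ⟨v, hv, hφv, _⟩ ↦ ?_, fun h v hv ↦ ?_⟩
  · have := hφ v hv
    omega
  · by_contra! hφv
    exact h _ ⟨v, hv, hφv, rfl⟩

lemma StableState.eq_of_reflTransGen {ψ₁ ψ₂ : V → ℤ}
    (hψ₁ : StableState Γ ψ₁) (hψ₂ : StableState Γ ψ₂)
    (h₁ : ReflTransGen (LegalStep Γ) φ ψ₁) (h₂ : ReflTransGen (LegalStep Γ) φ ψ₂) :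
    ψ₁ = ψ₂ := by
  have diamond : ∀ a b c, LegalStep Γ a b → LegalStep Γ a c →
      ∃ d, ReflGen (LegalStep Γ) b d ∧ ReflTransGen (LegalStep Γ) c d := by
    intro a b c hab hac
    obtain rfl | ⟨d, hbd, hcd⟩ := hab.diamond hac
    · exact ⟨b, .refl, .refl⟩
    · exact ⟨d, .single hbd, .single hcd⟩
  obtain ⟨χ, h₁χ, h₂χ⟩ := church_rosser diamond h₁ h₂
  rw [stableState_iff_forall_not_legalStep] at hψ₁ hψ₂
  rw [← (reflTransGen_iff_eq hψ₁).1 h₁χ, (reflTransGen_iff_eq hψ₂).1 h₂χ]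

end Diamond

section Relaxation

variable {Γ : Set V} {φ ψ : V → ℤ}

lemma StableState.relaxes (hφ : StableState Γ φ) : Relaxes Γ φ φ :=
  ⟨0, fun _ ↦ φ, ⟨rfl, by simp, hφ⟩, rfl⟩

lemma Relaxes.head {φ' : V → ℤ} (hstep : LegalStep Γ φ φ') (h : Relaxes Γ φ' ψ) :
    Relaxes Γ φ ψ := by
  obtain ⟨m, ρ, ⟨rfl, hρ, hstable⟩, rfl⟩ := h
  refine ⟨m + 1, fun | 0 => φ | i + 1 => ρ i, ⟨rfl, fun i hi ↦ ?_, hstable⟩, rfl⟩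
  cases i with
  | zero => exact hstep
  | succ i => exact hρ i (by omega)

lemma Relaxes.stableState (h : Relaxes Γ φ ψ) : StableState Γ ψ := by
  obtain ⟨m, ρ, ⟨-, -, hstable⟩, rfl⟩ := h
  exact hstable

lemma Relaxes.reflTransGen (h : Relaxes Γ φ ψ) : Relation.ReflTransGen (LegalStep Γ) φ ψ := by
  obtain ⟨m, ρ, ⟨rfl, hρ, -⟩, rfl⟩ := h
  exact (reflTransGen_of_succ_of_le (fun i j ↦ LegalStep Γ (ρ i) (ρ j))
    (fun i hi ↦ hρ i hi.2) m.zero_le).lift ρ fun _ _ ↦ id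

lemma Relaxes.unique {ψ₁ ψ₂ : V → ℤ} (h₁ : Relaxes Γ φ ψ₁) (h₂ : Relaxes Γ φ ψ₂) : ψ₁ = ψ₂ :=
  h₁.stableState.eq_of_reflTransGen h₂.stableState h₁.reflTransGen h₂.reflTransGen

lemma exists_relaxes_of_wellFounded (hwf : WellFounded (Function.swap (LegalStep Γ)))
    (φ : V → ℤ) : ∃ ψ, Relaxes Γ φ ψ := by
  induction φ using hwf.induction with
  | _ φ ih =>
    by_cases hφ : StableState Γ φ
    · exact ⟨φ, hφ.relaxes⟩
    · obtain ⟨φ', hstep⟩ : ∃ φ', LegalStep Γ φ φ' := by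
        simpa only [stableState_iff_forall_not_legalStep, not_forall, not_not] using hφ
      obtain ⟨ψ, hψ⟩ := ih φ' hstep
      exact ⟨ψ, hψ.head hstep⟩

end Relaxation

lemma sum_nbrs {M : Type*} [AddCommMonoid M] (f : V → M) (v : V) :
    ∑ w ∈ nbrs v, f w =
      f (v.1 + 1, v.2) + (f (v.1 - 1, v.2) + (f (v.1, v.2 + 1) + f (v.1, v.2 - 1))) := by
  rw [nbrs, Finset.sum_insert, Finset.sum_insert, Finset.sum_insert, Finset.sum_singleton] <;>
    simp only [Finset.mem_insert, Finset.mem_singleton, Prod.mk.injEq] <;> omega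

/-- Strict superharmonicity on `Γ` for the discrete Laplacian of the full lattice `ℤ²`: at each
site of `Γ`, the average of `g` over all four neighbours, inside `Γ` or not, is less than the
value of `g`. -/
def IsStrictlySuperharmonicOn (g : V → ℤ) (Γ : Set V) : Prop :=
  ∀ v ∈ Γ, ∑ w ∈ nbrs v, g w < 4 * g v

lemma isStrictlySuperharmonicOn_strip (B : ℤ) :
    IsStrictlySuperharmonicOn (fun v ↦ ((B + 1) ^ 2 - v.1 ^ 2)⁺) {v | |v.1| ≤ B} := by
  rintro ⟨x, y⟩ hx
  obtain ⟨hBx, hxB⟩ : -B ≤ x ∧ x ≤ B := abs_le.1 hx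
  have eq_of_adjacent (z : ℤ) (hz : x - 1 ≤ z ∧ z ≤ x + 1) :
      ((B + 1) ^ 2 - z ^ 2)⁺ = (B + 1) ^ 2 - z ^ 2 :=
    posPart_of_nonneg (sub_nonneg.2 (sq_le_sq' (by omega) (by omega)))
  simp only [sum_nbrs]
  rw [eq_of_adjacent x (by omega), eq_of_adjacent (x + 1) (by omega),
    eq_of_adjacent (x - 1) (by omega)]
  linarith

lemma exists_nonneg_isStrictlySuperharmonicOn {Γ : Set V} (hΓ : Γ.Finite) :
    ∃ g : V → ℤ, 0 ≤ g ∧ IsStrictlySuperharmonicOn g Γ := by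
  obtain ⟨B, hB⟩ := (hΓ.image fun v ↦ |v.1|).bddAbove
  exact ⟨_, fun _ ↦ posPart_nonneg _,
    fun v hv ↦ isStrictlySuperharmonicOn_strip B v (hB ⟨v, hv, rfl⟩)⟩

lemma sum_mul_toppleAt {S : Finset V} {v : V} (hv : v ∈ S) (g φ : V → ℤ) :
    ∑ w ∈ S, g w * toppleAt S v φ w =
      ∑ w ∈ S, g w * φ w - 4 * g v + ∑ w ∈ nbrs v with w ∈ S, g w := by
  have expand : ∀ w ∈ S, g w * toppleAt S v φ w =
      g w * φ w - (if w = v then 4 * g w else 0) + (if w ∈ nbrs v then g w else 0) := by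
    intro w hw
    simp only [toppleAt, Finset.mem_coe, hw, and_true]
    split_ifs <;> ring
  rw [Finset.sum_congr rfl expand, Finset.sum_add_distrib, Finset.sum_sub_distrib,
    Finset.sum_ite_eq' S v, if_pos hv, Finset.sum_ite_mem, Finset.filter_mem_eq_inter,
    Finset.inter_comm]

lemma posPart_toppleAt_le {φ : V → ℤ} {v : V} (hφv : 4 ≤ φ v) (Γ : Set V) :
    (toppleAt Γ v φ)⁺ ≤ toppleAt Γ v φ⁺ := by
  intro w
  have hφw : φ w ≤ φ⁺ w := le_posPart φ w
  have hφw_nonneg : 0 ≤ φ⁺ w := posPart_nonneg φ w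
  rw [Pi.posPart_apply]
  refine sup_le ?_ ?_
  · simp only [toppleAt]
    gcongr
  · obtain rfl | hwv := eq_or_ne w v
    · simp only [toppleAt, if_true]
      split_ifs <;> omega
    · exact hφw_nonneg.trans (le_toppleAt_of_ne Γ hwv φ⁺)

/-- The potential of `φ` with weight `g`, which measures the progress of a relaxation. Only the
positive part of `φ` is counted, so that the potential is nonnegative for nonnegative `g` even if
`φ` takes negative values. -/
def potential (g : V → ℤ) (S : Finset V) (φ : V → ℤ) : ℤ :=
  ∑ w ∈ S, g w * φ⁺ w

lemma potential_nonneg {g : V → ℤ} (hg : 0 ≤ g) (S : Finset V) (φ : V → ℤ) :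
    0 ≤ potential g S φ :=
  Finset.sum_nonneg fun w _ ↦ mul_nonneg (hg w) (posPart_nonneg φ w)

lemma LegalStep.potential_lt {g : V → ℤ} (hg : 0 ≤ g) {S : Finset V}
    (hgS : IsStrictlySuperharmonicOn g S) {φ ψ : V → ℤ} (h : LegalStep S φ ψ) :
    potential g S ψ < potential g S φ := by
  obtain ⟨v, hv, hφv, rfl⟩ := h
  have sum_nbrs_inter_le : ∑ w ∈ nbrs v with w ∈ S, g w ≤ ∑ w ∈ nbrs v, g w :=
    Finset.sum_le_sum_of_subset_of_nonneg (Finset.filter_subset _ _) fun w _ _ ↦ hg w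
  calc potential g S (toppleAt S v φ)
      ≤ ∑ w ∈ S, g w * toppleAt S v φ⁺ w :=
        Finset.sum_le_sum fun w _ ↦
          mul_le_mul_of_nonneg_left (posPart_toppleAt_le hφv S w) (hg w)
    _ = potential g S φ - 4 * g v + ∑ w ∈ nbrs v with w ∈ S, g w := sum_mul_toppleAt hv g φ⁺
    _ < potential g S φ := by linarith [hgS v hv]

theorem wellFounded_swap_legalStep {Γ : Set V} (hΓ : Γ.Finite) :
    WellFounded (Function.swap (LegalStep Γ)) := by
  obtain ⟨g, hg, hgΓ⟩ := exists_nonneg_isStrictlySuperharmonicOn hΓ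
  lift Γ to Finset V using hΓ
  refine Subrelation.wf (fun {ψ φ} h ↦ ?_)
    (InvImage.wf (fun φ ↦ (potential g Γ φ).toNat) wellFounded_lt)
  have hlt : potential g Γ ψ < potential g Γ φ := LegalStep.potential_lt hg hgΓ h
  exact (Int.toNat_lt_toNat ((potential_nonneg hg Γ ψ).trans_lt hlt)).2 hlt

theorem statement0_general (Γ : Set V) (hΓ : Γ.Finite) (φ : V → ℤ) :
    (¬ ∃ ρ : ℕ → V → ℤ, ρ 0 = φ ∧ ∀ i : ℕ, LegalStep Γ (ρ i) (ρ (i + 1))) ∧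
    (∃ ψ : V → ℤ, Relaxes Γ φ ψ) ∧
    (∀ ψ₁ ψ₂ : V → ℤ, Relaxes Γ φ ψ₁ → Relaxes Γ φ ψ₂ → ψ₁ = ψ₂) := by
  have hwf := wellFounded_swap_legalStep hΓ
  refine ⟨?_, exists_relaxes_of_wellFounded hwf φ, fun _ _ ↦ Relaxes.unique⟩
  rintro ⟨ρ, -, hρ⟩
  exact (wellFounded_iff_isEmpty_descending_chain.1 hwf).elim ⟨ρ, hρ⟩

/-- For any finite `Γ ⊆ ℤ²` and any state `φ` on `Γ`, there is no
infinite sequence of legal topplings starting from `φ` (every sequence of legal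
topplings terminates after finitely many steps), a relaxation of `φ` exists, and the
resulting stable state is independent of the order of the legal topplings. -/
theorem statement0 (Γ : Set V) (hΓ : Γ.Finite) (φ : V → ℤ) (hφ : IsState Γ φ) :
    (¬ ∃ ρ : ℕ → V → ℤ, ρ 0 = φ ∧ ∀ i : ℕ, LegalStep Γ (ρ i) (ρ (i + 1))) ∧
    (∃ ψ : V → ℤ, Relaxes Γ φ ψ) ∧
    (∀ ψ₁ ψ₂ : V → ℤ, Relaxes Γ φ ψ₁ → Relaxes Γ φ ψ₂ → ψ₁ = ψ₂) :=
  statement0_general Γ hΓ φ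
end

section
/- Let φ be a state on a finite set Γ ⊂ ℤ² and let F be the pointwise minimum of the set 𝓗 of all functions H : ℤ² → ℤ≥0 vanishing outside Γ with φ + ΔH ≤ 3 on Γ. Then for every relaxation sequence of φ and every v ∈ ℤ², the number of legal topplings performed at the site v in that relaxation equals F(v). -/
open Filter
open scoped Pointwise Topology

/-- The discrete Laplacian `ΔH(v) = -4H(v) + ∑_{w ∈ n(v)} H(w)`. -/
def lap (H : V → ℤ) (v : V) : ℤ := -4 * H v + ∑ w ∈ nbrs v, H w

/-- `H` belongs to the class `𝓗` for the state `φ` on `Γ`: it is nonnegative,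
vanishes outside `Γ`, and `φ + ΔH ≤ 3` on `Γ`. -/
def Odometer (Γ : Set V) (φ : V → ℤ) (H : V → ℤ) : Prop :=
  (∀ v, 0 ≤ H v) ∧ (∀ v ∉ Γ, H v = 0) ∧ ∀ v ∈ Γ, φ v + lap H v ≤ 3

/-- A relaxation of `φ` recording the toppled sites: at step `i < m` the site `σ i ∈ Γ`
with at least `4` grains is toppled, and the final state is stable. -/
def IsToppleSeq (Γ : Set V) (φ : V → ℤ) (m : ℕ) (σ : ℕ → V) (ρ : ℕ → V → ℤ) : Prop :=
  ρ 0 = φ ∧ (∀ i < m, σ i ∈ Γ ∧ 4 ≤ ρ i (σ i) ∧ ρ (i + 1) = toppleAt Γ (σ i) (ρ i)) ∧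
    StableState Γ (ρ m)

/-!
On `Γ`, toppling `v` adds the Laplacian of the unit mass at `v`, so after any toppling sequence the
state is the initial one plus the Laplacian of the toppling count `N`. Hence the count of a
relaxation lies in `𝓗`. Conversely, let `H ∈ 𝓗`. As long as `N ≤ H`, a site `v` with `N v = H v`
satisfies `ΔN v ≤ ΔH v`, hence holds at most `3` grains and cannot be toppled: `N` never
exceeds `H`.
-/

theorem mem_nbrs_comm {v w : V} : v ∈ nbrs w ↔ w ∈ nbrs v := by
  simp only [nbrs, Finset.mem_insert, Finset.mem_singleton, Prod.ext_iff]
  omega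

theorem lap_zero : lap 0 = 0 := by
  ext v
  simp [lap]

theorem lap_add (G H : V → ℤ) : lap (G + H) = lap G + lap H := by
  ext v
  simp only [lap, Pi.add_apply, Finset.sum_add_distrib]
  ring

theorem lap_single_one (v w : V) :
    lap (Pi.single v 1) w = -(if w = v then 4 else 0) + if w ∈ nbrs v then 1 else 0 := by
  simp [lap, Pi.single_apply, mem_nbrs_comm (v := v), apply_ite Neg.neg]

theorem lap_le_lap_of_le_of_eq {G H : V → ℤ} {v : V} (hle : G ≤ H) (heq : G v = H v) :
    lap G v ≤ lap H v := by
  unfold lap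
  rw [heq]
  gcongr with w
  exact hle w

theorem toppleAt_apply_of_mem {Γ : Set V} {w : V} (hw : w ∈ Γ) (v : V) (φ : V → ℤ) :
    toppleAt Γ v φ w = φ w + lap (Pi.single v 1) w := by
  simp only [toppleAt, hw, and_true, lap_single_one]
  ring

theorem lt_of_le_of_stableState {Γ : Set V} {φ G H : V → ℤ} {v : V} (hle : G ≤ H)
    (hH : StableState Γ (φ + lap H)) (hv : v ∈ Γ) (hG : 4 ≤ φ v + lap G v) : G v < H v := by
  refine (hle v).lt_of_ne fun heq ↦ ?_
  have hlap : lap G v ≤ lap H v := lap_le_lap_of_le_of_eq hle heq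
  have hstable : φ v + lap H v ≤ 3 := hH v hv
  linarith

/-- The number of indices `i < n` with `σ i = v`: how often `v` is toppled in the first `n` steps of
a relaxation toppling the sites `σ 0, σ 1, …`. It is integer valued so that `lap` applies to it. -/
def toppleCount (σ : ℕ → V) (n : ℕ) (v : V) : ℤ :=
  ((Finset.range n).filter (fun i => σ i = v)).card

theorem toppleCount_zero (σ : ℕ → V) : toppleCount σ 0 = 0 := by
  ext v
  simp [toppleCount]

theorem toppleCount_succ (σ : ℕ → V) (n : ℕ) :
    toppleCount σ (n + 1) = toppleCount σ n + Pi.single (σ n) 1 := by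
  ext v
  simp [toppleCount, ← Nat.count_eq_card_filter_range, Nat.count_succ, Pi.single_apply,
    eq_comm (a := v)]

theorem toppleCount_nonneg (σ : ℕ → V) (n : ℕ) : 0 ≤ toppleCount σ n :=
  fun _ ↦ Int.natCast_nonneg _

theorem toppleCount_eq_zero {σ : ℕ → V} {n : ℕ} {v : V} (h : ∀ i < n, σ i ≠ v) :
    toppleCount σ n v = 0 := by
  simpa [toppleCount, Finset.filter_eq_empty_iff] using h

section ToppleSequence

variable {Γ : Set V} {σ : ℕ → V} {ρ : ℕ → V → ℤ}

theorem apply_eq_add_lap_toppleCount {n : ℕ}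
    (hρ : ∀ i < n, ρ (i + 1) = toppleAt Γ (σ i) (ρ i)) {v : V} (hv : v ∈ Γ) :
    ρ n v = ρ 0 v + lap (toppleCount σ n) v := by
  induction n with
  | zero => simp [toppleCount_zero, lap_zero]
  | succ n ih =>
    rw [hρ n n.lt_succ_self, toppleAt_apply_of_mem hv, ih fun i hi ↦ hρ i (by omega),
      toppleCount_succ, lap_add, Pi.add_apply, add_assoc]

/-- The first `m` steps of `ρ` are legal topplings in `Γ`, at the sites `σ 0, …, σ (m - 1)`. Unlike
in `IsToppleSeq`, the final state need not be stable, so that initial segments qualify. -/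
def IsLegalSeq (Γ : Set V) (m : ℕ) (σ : ℕ → V) (ρ : ℕ → V → ℤ) : Prop :=
  ∀ i < m, σ i ∈ Γ ∧ 4 ≤ ρ i (σ i) ∧ ρ (i + 1) = toppleAt Γ (σ i) (ρ i)

theorem IsLegalSeq.toppleCount_le {m : ℕ} (h : IsLegalSeq Γ m σ ρ) {H : V → ℤ} (hH₀ : 0 ≤ H)
    (hH : StableState Γ (ρ 0 + lap H)) : toppleCount σ m ≤ H := by
  induction m with
  | zero => rwa [toppleCount_zero]
  | succ n ih =>
    have hinit : IsLegalSeq Γ n σ ρ := fun i hi ↦ h i (by omega)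
    have hle : toppleCount σ n ≤ H := ih hinit
    obtain ⟨hmem, hlegal, -⟩ := h n n.lt_succ_self
    rw [apply_eq_add_lap_toppleCount (fun i hi ↦ (hinit i hi).2.2) hmem] at hlegal
    have hlt : toppleCount σ n (σ n) < H (σ n) := lt_of_le_of_stableState hle hH hmem hlegal
    rw [toppleCount_succ]
    intro v
    obtain rfl | hv := eq_or_ne v (σ n)
    · simpa using Int.add_one_le_of_lt hlt
    · simpa [hv] using hle v

theorem IsToppleSeq.odometer_toppleCount {φ : V → ℤ} {m : ℕ} (h : IsToppleSeq Γ φ m σ ρ) :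
    Odometer Γ φ (toppleCount σ m) := by
  obtain ⟨rfl, hlegal, hstable⟩ := h
  refine ⟨toppleCount_nonneg σ m, fun v hv ↦ ?_, fun v hv ↦ ?_⟩
  · exact toppleCount_eq_zero fun i hi hiv ↦ hv (hiv ▸ (hlegal i hi).1)
  · rw [← apply_eq_add_lap_toppleCount (fun i hi ↦ (hlegal i hi).2.2) hv]
    exact hstable v hv

theorem statement2_general {φ : V → ℤ} {m : ℕ} (h : IsToppleSeq Γ φ m σ ρ) :
    IsLeast {H : V → ℤ | Odometer Γ φ H} (toppleCount σ m) := by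
  refine ⟨h.odometer_toppleCount, fun H ⟨hH₀, _, hH⟩ ↦ ?_⟩
  obtain ⟨rfl, hlegal, -⟩ := h
  exact IsLegalSeq.toppleCount_le hlegal hH₀ hH

end ToppleSequence

/-- Let `F` be the pointwise minimum of the class `𝓗` of nonnegative
functions vanishing outside `Γ` with `φ + ΔH ≤ 3` on `Γ`. Then in every relaxation of
`φ`, the number of legal topplings performed at a site `v` equals `F v`. -/
theorem statement2 (Γ : Set V) (hΓ : Γ.Finite) (φ : V → ℤ) (hφ : IsState Γ φ)
    (F : V → ℤ)
    (hF : ∀ v : V, IsLeast {n : ℤ | ∃ H : V → ℤ, Odometer Γ φ H ∧ H v = n} (F v)) :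
    ∀ (m : ℕ) (σ : ℕ → V) (ρ : ℕ → V → ℤ), IsToppleSeq Γ φ m σ ρ →
      ∀ v : V, (((Finset.range m).filter (fun i => σ i = v)).card : ℤ) = F v := by
  intro m σ ρ h v
  exact ((Function.monotone_eval v).map_isLeast (statement2_general h)).unique (hF v)
end

section
/- Every Ω-tropical curve C can be represented as the intersection of Ω with a plane tropical curve: there exists a plane tropical curve C' ⊂ ℝ² (with positive integer weights on its edges) such that C = C' ∩ Ω as weighted graphs. -/
open Filter
open scoped Pointwise Topology

/-! ## Geometry: lattice polygons, scaled lattice sets, deviation sets -/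

/-- The embedding of the lattice `ℤ²` into the plane `ℝ²`. -/
def toR (v : ℤ × ℤ) : ℝ × ℝ := ((v.1 : ℝ), (v.2 : ℝ))

/-- `Ω` is a non-degenerate convex lattice polygon: the convex hull of a finite set of
lattice points, with nonempty interior. -/
def IsLatticePolygon (Ω : Set (ℝ × ℝ)) : Prop :=
  (∃ S : Finset (ℤ × ℤ), Ω = convexHull ℝ (toR '' ↑S)) ∧ (interior Ω).Nonempty

/-- `Γ_N = (NΩ) ∩ ℤ²`. -/
def latGrid (Ω : Set (ℝ × ℝ)) (N : ℕ) : Set V := {v : V | toR v ∈ (N : ℝ) • Ω}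

/-- Coordinate-wise floor `[Np] ∈ ℤ²` of the rescaled point `Np`, `p ∈ ℝ²`. -/
noncomputable def flr (N : ℕ) (p : ℝ × ℝ) : V := (⌊(N : ℝ) * p.1⌋, ⌊(N : ℝ) * p.2⌋)

open Classical in
/-- The perturbed maximal state `3 + ∑_{p ∈ P} δ_{[Np]}` on `Γ_N` (as a function on `ℤ²`
vanishing outside `Γ_N`). -/
noncomputable def stateN (Ω : Set (ℝ × ℝ)) (P : Finset (ℝ × ℝ)) (N : ℕ) : V → ℤ :=
  fun v => if v ∈ latGrid Ω N then 3 + ∑ p ∈ P, (if v = flr N p then 1 else 0) else 0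

/-- The scaled deviation set `C_N = (1/N)·{v ∈ Γ_N : ψ v < 3}` of a state `ψ` on `Γ_N`. -/
def devSet (Ω : Set (ℝ × ℝ)) (N : ℕ) (ψ : V → ℤ) : Set (ℝ × ℝ) :=
  {x | ∃ v ∈ latGrid Ω N, ψ v < 3 ∧ x = ((v.1 : ℝ) / N, (v.2 : ℝ) / N)}

/-- `l ∈ ℤ²` is the primitive integer vector of the direction `d ∈ ℝ²`:
its coordinates are coprime and `d` is a positive multiple of `l`. -/
def PrimOut (d : ℝ × ℝ) (l : ℤ × ℤ) : Prop :=
  Int.gcd l.1 l.2 = 1 ∧ ∃ t : ℝ, 0 < t ∧ d = t • toR l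

/-- `d ∈ ℝ²` has rational slope (it is a positive multiple of an integer vector). -/
def RatDir (d : ℝ × ℝ) : Prop := ∃ l, PrimOut d l

open Classical in
/-- The primitive integer vector of a direction `d` with rational slope
(junk value `0` otherwise). -/
noncomputable def prim (d : ℝ × ℝ) : ℤ × ℤ :=
  if h : ∃ l, PrimOut d l then h.choose else 0

/-- An edge (straight closed segment) recorded by its two endpoints. -/
abbrev Seg : Type := (ℝ × ℝ) × (ℝ × ℝ)

/-- The closed segment of an edge. -/
def seg (e : Seg) : Set (ℝ × ℝ) := segment ℝ e.1 e.2

/-! ## Ω-tropical curves -/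

/-- A valid edge set: no degenerate edges and each edge recorded in one orientation only. -/
def EdgeSet (E : Finset Seg) : Prop := ∀ e ∈ E, e.1 ≠ e.2 ∧ (e.2, e.1) ∉ E

/-- Edges meet only at common endpoints. -/
def Planar (E : Finset Seg) : Prop :=
  ∀ e ∈ E, ∀ e' ∈ E, e ≠ e' →
    seg e ∩ seg e' ⊆ ({e.1, e.2} : Set (ℝ × ℝ)) ∩ {e'.1, e'.2}

/-- The support of the graph: the union of its closed edges. -/
def gsupp (E : Finset Seg) : Set (ℝ × ℝ) := ⋃ e ∈ E, seg e

/-- `v` is a vertex of the graph `E`. -/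
def IsVert (E : Finset Seg) (v : ℝ × ℝ) : Prop := ∃ e ∈ E, e.1 = v ∨ e.2 = v

/-- The primitive integer vector of the edge `e`, oriented out of its endpoint `v`. -/
noncomputable def outDir (v : ℝ × ℝ) (e : Seg) : ℤ × ℤ :=
  if e.1 = v then prim (e.2 - e.1) else prim (e.1 - e.2)

open Classical in
/-- The balancing sum `∑_{e ∈ E_v} m_e l_e` at `v`, over edges incident to `v`, with
`l_e` oriented out of `v`. -/
noncomputable def balSum (E : Finset Seg) (m : Seg → ℕ) (v : ℝ × ℝ) : ℤ × ℤ :=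
  ∑ e ∈ E.filter (fun e => e.1 = v ∨ e.2 = v), (m e : ℤ) • outDir v e

/-- The segment `[a, b]` is a side of the polygon `Ω`: its endpoints are distinct
vertices (extreme points) of `Ω` and it lies in the boundary of `Ω`. -/
def IsSide (Ω : Set (ℝ × ℝ)) (a b : ℝ × ℝ) : Prop :=
  a ≠ b ∧ a ∈ Set.extremePoints ℝ Ω ∧ b ∈ Set.extremePoints ℝ Ω ∧
    segment ℝ a b ⊆ frontier Ω

/-- A labeling of the sides of `Ω` by positive integers (independent of orientation). -/
def SideLabel (Ω : Set (ℝ × ℝ)) (d : Seg → ℤ) : Prop :=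
  ∀ a b : ℝ × ℝ, IsSide Ω a b → 0 < d (a, b) ∧ d (a, b) = d (b, a)

/-- The outer balancing equations: at every vertex `v` of `Ω` with incident sides
`s₁ = [v,a]`, `s₂ = [v,b]`, one has `∑_{e ∈ E_v} m_e l_e = d_{s₁} l_{s₁} + d_{s₂} l_{s₂}`. -/
def OuterBalEq (Ω : Set (ℝ × ℝ)) (E : Finset Seg) (m : Seg → ℕ) (d : Seg → ℤ) : Prop :=
  ∀ v ∈ Set.extremePoints ℝ Ω, ∀ a b : ℝ × ℝ, a ≠ b →
    IsSide Ω v a → IsSide Ω v b →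
      balSum E m v = d (v, a) • prim (a - v) + d (v, b) • prim (b - v)

/-- `(E, m)` is an `Ω`-tropical curve: a finite weighted planar graph contained in `Ω`
whose edges have rational slopes and positive integer weights, meeting `∂Ω` exactly in
the vertices of `Ω`, balanced at every vertex interior to `Ω`, and satisfying the outer
balancing condition at the vertices of `Ω` for a unique positive labeling of the sides. -/
def OmegaTropCurve (Ω : Set (ℝ × ℝ)) (E : Finset Seg) (m : Seg → ℕ) : Prop :=
  EdgeSet E ∧ Planar E ∧ (∀ e ∈ E, 0 < m e) ∧ (∀ e ∈ E, RatDir (e.2 - e.1)) ∧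
  gsupp E ⊆ Ω ∧
  gsupp E ∩ frontier Ω = Set.extremePoints ℝ Ω ∧
  (∀ v : ℝ × ℝ, IsVert E v → v ∈ interior Ω → balSum E m v = 0) ∧
  ∃ d : Seg → ℤ, SideLabel Ω d ∧ OuterBalEq Ω E m d ∧
    ∀ d' : Seg → ℤ, SideLabel Ω d' → OuterBalEq Ω E m d' →
      ∀ a b : ℝ × ℝ, IsSide Ω a b → d' (a, b) = d (a, b)

/-! ## Plane tropical curves -/

/-- Combinatorial data of a plane tropical curve: finitely many bounded edges (segments)
and unbounded edges (rays, given by a base point and a primitive integer direction),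
with positive integer weights. -/
structure PlaneTropData where
  segs : Finset Seg
  rays : Finset ((ℝ × ℝ) × (ℤ × ℤ))
  msegs : Seg → ℕ
  mrays : (ℝ × ℝ) × (ℤ × ℤ) → ℕ

/-- The closed ray from `r.1` in the direction `r.2`. -/
def raySet (r : (ℝ × ℝ) × (ℤ × ℤ)) : Set (ℝ × ℝ) :=
  {x | ∃ t : ℝ, 0 ≤ t ∧ x = r.1 + t • toR r.2}

/-- The support of a plane tropical curve. -/
def ptcSupp (C : PlaneTropData) : Set (ℝ × ℝ) :=
  (⋃ e ∈ C.segs, seg e) ∪ ⋃ r ∈ C.rays, raySet r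

/-- `v` is a vertex of the plane tropical curve. -/
def ptcVert (C : PlaneTropData) (v : ℝ × ℝ) : Prop :=
  (∃ e ∈ C.segs, e.1 = v ∨ e.2 = v) ∨ ∃ r ∈ C.rays, r.1 = v

open Classical in
/-- The balancing sum at `v`: incident bounded edges and rays emanating from `v`,
with multiplicities, all oriented out of `v`. -/
noncomputable def ptcBalSum (C : PlaneTropData) (v : ℝ × ℝ) : ℤ × ℤ :=
  balSum C.segs C.msegs v +
    ∑ r ∈ C.rays.filter (fun r => r.1 = v), (C.mrays r : ℤ) • r.2

/-- `C` is a plane tropical curve: a planar graph in `ℝ²` with finitely many edges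
(possibly unbounded) of rational slope and positive integer weight, satisfying the
balancing condition at every vertex. -/
def IsPlaneTropCurve (C : PlaneTropData) : Prop :=
  EdgeSet C.segs ∧
  (∀ e ∈ C.segs, 0 < C.msegs e ∧ RatDir (e.2 - e.1)) ∧
  (∀ r ∈ C.rays, 0 < C.mrays r ∧ Int.gcd r.2.1 r.2.2 = 1) ∧
  (∀ e ∈ C.segs, ∀ e' ∈ C.segs, e ≠ e' →
    seg e ∩ seg e' ⊆ ({e.1, e.2} : Set (ℝ × ℝ)) ∩ {e'.1, e'.2}) ∧
  (∀ e ∈ C.segs, ∀ r ∈ C.rays,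
    seg e ∩ raySet r ⊆ ({e.1, e.2} : Set (ℝ × ℝ)) ∩ {r.1}) ∧
  (∀ r ∈ C.rays, ∀ r' ∈ C.rays, r ≠ r' →
    raySet r ∩ raySet r' ⊆ ({r.1} : Set (ℝ × ℝ)) ∩ {r'.1}) ∧
  ∀ v : ℝ × ℝ, ptcVert C v → ptcBalSum C v = 0

/-- The plane tropical curve `C'` extends the `Ω`-tropical curve `(E, m)`, i.e.
`C = C' ∩ Ω` as weighted graphs: the support of `C'` meets `Ω` exactly in the support
of `E`, and every edge of `E` lies in an edge of `C'` of the same weight. -/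
def ExtendsCurve (Ω : Set (ℝ × ℝ)) (E : Finset Seg) (m : Seg → ℕ)
    (C : PlaneTropData) : Prop :=
  IsPlaneTropCurve C ∧ ptcSupp C ∩ Ω = gsupp E ∧
  ∀ e ∈ E, (∃ e' ∈ C.segs, seg e ⊆ seg e' ∧ C.msegs e' = m e) ∨
    (∃ r ∈ C.rays, seg e ⊆ raySet r ∧ C.mrays r = m e)

/-!
Extend every side of `Ω` beyond both of its endpoints to rays, weighted by the label `d_s` of the
side `s`. The two rays at a vertex `v` of `Ω` contribute `-d_{s₁} l_{s₁} - d_{s₂} l_{s₂}` to the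
balancing sum, which the outer balancing condition turns into balancing at `v`. Convexity keeps the
rays away from `Ω` except at their base points, and outside `Ω` the only vertices are crossings of
straight weighted rays, where opposite contributions cancel. As no three vertices of `Ω` are
collinear, two rays have at most one common point, so subdividing them at their finitely many
crossings yields a planar graph.
-/

theorem toR_injective : Function.Injective toR := fun _ _ h =>
  Prod.ext (Int.cast_injective (congrArg Prod.fst h)) (Int.cast_injective (congrArg Prod.snd h))

theorem toR_neg (l : ℤ × ℤ) : toR (-l) = -toR l := by
  simp [toR]

theorem toR_sub (l l' : ℤ × ℤ) : toR (l - l') = toR l - toR l' := by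
  simp [toR]

theorem toR_ne_zero {l : ℤ × ℤ} (hl : Int.gcd l.1 l.2 = 1) : toR l ≠ 0 := by
  intro h
  have hl0 : l = 0 := toR_injective (h.trans ((by simp [toR] : toR 0 = 0).symm))
  simp [hl0] at hl

theorem exists_int_mul_of_smul_toR_eq {l l' : ℤ × ℤ} {t t' : ℝ} (hl : Int.gcd l.1 l.2 = 1)
    (h : t • toR l = t' • toR l') : ∃ k : ℤ, t = t' * k := by
  obtain ⟨x, y, hxy⟩ := Int.isCoprime_iff_gcd_eq_one.mpr hl
  have bezout : (x * l.1 + y * l.2 : ℝ) = 1 := mod_cast hxy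
  have h₁ : t * l.1 = t' * l'.1 := congrArg Prod.fst h
  have h₂ : t * l.2 = t' * l'.2 := congrArg Prod.snd h
  refine ⟨x * l'.1 + y * l'.2, ?_⟩
  push_cast
  linear_combination x * h₁ + y * h₂ - t * bezout

theorem PrimOut.unique {d : ℝ × ℝ} {l l' : ℤ × ℤ} (h : PrimOut d l) (h' : PrimOut d l') :
    l = l' := by
  obtain ⟨hl, t, ht, rfl⟩ := h
  obtain ⟨hl', t', ht', heq⟩ := h'
  obtain ⟨k, hk⟩ := exists_int_mul_of_smul_toR_eq hl heq
  obtain ⟨k', hk'⟩ := exists_int_mul_of_smul_toR_eq hl' heq.symm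
  have hkpos : 0 < k := by
    have : 0 < t' * k := hk ▸ ht
    exact_mod_cast pos_of_mul_pos_right this ht'.le
  have hkk' : k * k' = 1 := by
    have : t * (k * k') = t * 1 := by rw [mul_one, mul_comm (k : ℝ), ← mul_assoc, ← hk', ← hk]
    exact_mod_cast mul_left_cancel₀ ht.ne' this
  have hk1 : k = 1 := (Int.eq_one_or_neg_one_of_mul_eq_one hkk').resolve_right (by omega)
  have htt' : t = t' := by simpa [hk1] using hk
  exact toR_injective (smul_right_injective _ ht.ne' (htt' ▸ heq))

theorem PrimOut.prim_eq {d : ℝ × ℝ} {l : ℤ × ℤ} (h : PrimOut d l) : prim d = l := by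
  have hex : ∃ l, PrimOut d l := ⟨l, h⟩
  rw [prim, dif_pos hex]
  exact hex.choose_spec.unique h

theorem PrimOut.neg {d : ℝ × ℝ} {l : ℤ × ℤ} (h : PrimOut d l) : PrimOut (-d) (-l) := by
  obtain ⟨hl, t, ht, rfl⟩ := h
  exact ⟨by simpa using hl, t, ht, by rw [toR_neg, smul_neg]⟩

theorem PrimOut.ne_zero {d : ℝ × ℝ} {l : ℤ × ℤ} (h : PrimOut d l) : d ≠ 0 := by
  obtain ⟨hl, t, ht, rfl⟩ := h
  exact smul_ne_zero ht.ne' (toR_ne_zero hl)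

theorem RatDir.primOut_prim {d : ℝ × ℝ} (h : RatDir d) : PrimOut d (prim d) := by
  obtain ⟨l, hl⟩ := h
  rwa [hl.prim_eq]

theorem ratDir_toR {z : ℤ × ℤ} (hz : z ≠ 0) : RatDir (toR z) := by
  have hg : 0 < Int.gcd z.1 z.2 := Int.gcd_pos_iff.mpr <| by
    contrapose! hz
    exact Prod.ext hz.1 hz.2
  obtain ⟨a, b, hab, h₁, h₂⟩ := Int.exists_gcd_one hg
  refine ⟨(a, b), hab, Int.gcd z.1 z.2, mod_cast hg, Prod.ext ?_ ?_⟩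
  · exact (mod_cast h₁.trans (mul_comm _ _) : (z.1 : ℝ) = Int.gcd z.1 z.2 * a)
  · exact (mod_cast h₂.trans (mul_comm _ _) : (z.2 : ℝ) = Int.gcd z.1 z.2 * b)

section ExtremePoints

variable {F : Type*} [AddCommGroup F] [Module ℝ F] {s : Set F}

theorem eq_or_eq_of_wbtw_of_mem_extremePoints {v x y : F} (hv : v ∈ s.extremePoints ℝ)
    (hx : x ∈ s) (hy : y ∈ s) (h : Wbtw ℝ x v y) : x = v ∨ y = v :=
  (mem_extremePoints_iff_forall_segment.mp hv).2 x hx y hy (mem_segment_iff_wbtw.mpr h)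

theorem eq_or_eq_of_mem_extremePoints_of_mem_line {a b c : F} (ha : a ∈ s.extremePoints ℝ)
    (hb : b ∈ s.extremePoints ℝ) (hc : c ∈ s.extremePoints ℝ) (hab : a ≠ b)
    (h : c ∈ line[ℝ, a, b]) : c = a ∨ c = b := by
  rcases (collinear_insert_of_mem_affineSpan_pair h).wbtw_or_wbtw_or_wbtw with h | h | h
  · exact (eq_or_eq_of_wbtw_of_mem_extremePoints ha hc.1 hb.1 h).imp_right (absurd ·.symm hab)
  · exact Or.inr ((eq_or_eq_of_wbtw_of_mem_extremePoints hb ha.1 hc.1 h).resolve_left hab)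
  · exact (eq_or_eq_of_wbtw_of_mem_extremePoints hc hb.1 ha.1 h).symm.imp Eq.symm Eq.symm

theorem subsingleton_setOf_wbtw_inter_setOf_wbtw {v a v' a' : F} (hv : v ∈ s.extremePoints ℝ)
    (ha : a ∈ s.extremePoints ℝ) (hv' : v' ∈ s.extremePoints ℝ) (ha' : a' ∈ s.extremePoints ℝ)
    (hva : v ≠ a) (hva' : v' ≠ a') (hne : (v, a) ≠ (v', a')) :
    ({x | Wbtw ℝ x v a} ∩ {x | Wbtw ℝ x v' a'}).Subsingleton := by
  rintro x ⟨hx, hx'⟩ y ⟨hy, hy'⟩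
  by_contra hxy
  have hline (b c : F) (hbc : b ≠ c) (hxb : Wbtw ℝ x b c) (hyb : Wbtw ℝ y b c) :
      line[ℝ, x, y] = line[ℝ, b, c] := by
    rw [Set.pair_comm x, Set.pair_comm b]
    exact affineSpan_pair_eq_of_mem_of_mem_of_ne
      (hyb.left_mem_affineSpan_of_right_ne hbc.symm)
      (hxb.left_mem_affineSpan_of_right_ne hbc.symm) (Ne.symm hxy)
  have hlines : line[ℝ, v', a'] = line[ℝ, v, a] :=
    (hline v' a' hva' hx' hy').symm.trans (hline v a hva hx hy)
  rcases eq_or_eq_of_mem_extremePoints_of_mem_line hv ha hv' hva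
      (hlines ▸ left_mem_affineSpan_pair ℝ v' a') with rfl | rfl <;>
    rcases eq_or_eq_of_mem_extremePoints_of_mem_line hv ha ha' hva
      (hlines ▸ right_mem_affineSpan_pair ℝ _ a') with rfl | rfl
  · exact hva' rfl
  · exact hne rfl
  · exact hva ((wbtw_swap_right_iff ℝ x).mp ⟨hx, hx'⟩)
  · exact hva' rfl

end ExtremePoints

/-- The standard area form of the plane, `areaForm p q = det (p, q)`: it is nonnegative when `q`
lies counterclockwise of `p`. -/
def areaForm : (ℝ × ℝ) →ₗ[ℝ] (ℝ × ℝ) →ₗ[ℝ] ℝ :=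
  LinearMap.mk₂ ℝ (fun p q => p.1 * q.2 - p.2 * q.1)
    (fun _ _ _ => by simp only [Prod.fst_add, Prod.snd_add]; ring)
    (fun _ _ _ => by simp only [Prod.smul_fst, Prod.smul_snd, smul_eq_mul]; ring)
    (fun _ _ _ => by simp only [Prod.fst_add, Prod.snd_add]; ring)
    (fun _ _ _ => by simp only [Prod.smul_fst, Prod.smul_snd, smul_eq_mul]; ring)

theorem areaForm_apply (p q : ℝ × ℝ) : areaForm p q = p.1 * q.2 - p.2 * q.1 := rfl

theorem areaForm_self (p : ℝ × ℝ) : areaForm p p = 0 := by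
  rw [areaForm_apply]; ring

theorem neg_areaForm (p q : ℝ × ℝ) : -areaForm p q = areaForm q p := by
  simp only [areaForm_apply]; ring

theorem areaForm_smul_eq_add (p q x : ℝ × ℝ) :
    areaForm p q • x = areaForm x q • p + areaForm p x • q := by
  ext <;> simp only [areaForm_apply, Prod.smul_fst, Prod.smul_snd, Prod.fst_add, Prod.snd_add,
    smul_eq_mul] <;> ring

theorem exists_areaForm_ne_zero {p : ℝ × ℝ} (hp : p ≠ 0) : ∃ q, areaForm p q ≠ 0 := by
  contrapose! hp
  have h₁ := hp (0, 1)
  have h₂ := hp (-1, 0)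
  simp only [areaForm_apply, mul_one, mul_zero, mul_neg, sub_zero, sub_neg_eq_add,
    zero_add] at h₁ h₂
  exact Prod.ext h₁ h₂

theorem areaForm_ne_zero {p : ℝ × ℝ} (hp : p ≠ 0) : areaForm p ≠ 0 := by
  obtain ⟨q, hq⟩ := exists_areaForm_ne_zero hp
  exact fun h => hq (by rw [h, LinearMap.zero_apply])

theorem mem_line_of_areaForm_eq_zero {a b c : ℝ × ℝ} (hab : a ≠ b)
    (h : areaForm (b - a) (c - a) = 0) : c ∈ line[ℝ, a, b] := by
  obtain ⟨q, hq⟩ := exists_areaForm_ne_zero (sub_ne_zero.mpr hab.symm)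
  have hc : c = AffineMap.lineMap a b ((areaForm (b - a) q)⁻¹ * areaForm (c - a) q) := by
    have key := areaForm_smul_eq_add (b - a) q (c - a)
    rw [h, zero_smul, add_zero] at key
    rw [AffineMap.lineMap_apply_module', mul_smul, ← key, inv_smul_smul₀ hq, sub_add_cancel]
  exact hc ▸ AffineMap.lineMap_mem_affineSpan_pair _ _ _

theorem eq_of_mem_extremePoints_of_areaForm_eq_zero {Ω : Set (ℝ × ℝ)} {v a b : ℝ × ℝ}
    (hv : v ∈ Ω.extremePoints ℝ) (ha : a ∈ Ω.extremePoints ℝ) (hb : b ∈ Ω.extremePoints ℝ)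
    (hva : v ≠ a) (hvb : v ≠ b) (h : areaForm (a - v) (b - v) = 0) : b = a :=
  (eq_or_eq_of_mem_extremePoints_of_mem_line hv ha hb hva
    (mem_line_of_areaForm_eq_zero hva h)).resolve_left hvb.symm

/-- The vectors `y` of an open half-plane `0 < g` are ordered by direction through the slopes
`areaForm x y / g y`. -/
theorem exists_forall_areaForm_nonneg_and_exists_forall_areaForm_nonpos {T : Set (ℝ × ℝ)}
    (hfin : T.Finite) (hne : T.Nonempty) (g : (ℝ × ℝ) →ₗ[ℝ] ℝ) (hg : ∀ y ∈ T, 0 < g y) :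
    (∃ a ∈ T, ∀ y ∈ T, 0 ≤ areaForm a y) ∧ ∃ b ∈ T, ∀ y ∈ T, areaForm b y ≤ 0 := by
  obtain ⟨x, hx⟩ := id hne
  have areaForm_nonneg_of_slope_le {p q : ℝ × ℝ} (hp : p ∈ T) (hq : q ∈ T)
      (hpq : areaForm x p / g p ≤ areaForm x q / g q) : 0 ≤ areaForm p q := by
    rw [div_le_div_iff₀ (hg p hp) (hg q hq)] at hpq
    have key : areaForm p q * g x = areaForm x q * g p + areaForm p x * g q := by
      simpa using congrArg g (areaForm_smul_eq_add p q x)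
    rw [← neg_areaForm x p] at key
    exact nonneg_of_mul_nonneg_left (by linarith) (hg x hx)
  obtain ⟨a, ha, hamin⟩ := Set.exists_min_image T (fun y => areaForm x y / g y) hfin hne
  obtain ⟨b, hb, hbmax⟩ := Set.exists_max_image T (fun y => areaForm x y / g y) hfin hne
  refine ⟨⟨a, ha, fun y hy => areaForm_nonneg_of_slope_le ha hy (hamin y hy)⟩,
    b, hb, fun y hy => ?_⟩
  rw [← neg_areaForm, neg_nonpos]
  exact areaForm_nonneg_of_slope_le hy hb (hbmax y hy)

theorem notMem_interior_of_forall_le {Ω : Set (ℝ × ℝ)} {f : (ℝ × ℝ) →ₗ[ℝ] ℝ} (hf : f ≠ 0)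
    {x : ℝ × ℝ} (hx : ∀ y ∈ Ω, f x ≤ f y) : x ∉ interior Ω := by
  intro hxi
  have himage : f '' Ω ∈ 𝓝 (f x) :=
    (f.isOpenMap_of_finiteDimensional (LinearMap.surjective hf)).image_mem_nhds
      (mem_interior_iff_mem_nhds.mp hxi)
  have hIci : Set.Ici (f x) ∈ 𝓝 (f x) :=
    mem_of_superset himage (Set.image_subset_iff.mpr hx)
  simpa using mem_interior_iff_mem_nhds.mpr hIci

theorem isSide_of_forall_le {Ω : Set (ℝ × ℝ)} (hconv : Convex ℝ Ω) {v a : ℝ × ℝ}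
    (hv : v ∈ Ω.extremePoints ℝ) (ha : a ∈ Ω.extremePoints ℝ) (hva : v ≠ a)
    {f : (ℝ × ℝ) →ₗ[ℝ] ℝ} (hf : f ≠ 0) (hfa : f (a - v) = 0)
    (hfΩ : ∀ y ∈ Ω, 0 ≤ f (y - v)) : IsSide Ω v a := by
  refine ⟨hva, hv, ha, fun x hx => ⟨subset_closure (hconv.segment_subset hv.1 ha.1 hx), ?_⟩⟩
  rw [map_sub, sub_eq_zero] at hfa
  have hfx : f x = f v := by
    obtain ⟨s, t, -, -, hst, rfl⟩ := hx
    rw [map_add, map_smul, map_smul, hfa, ← add_smul, hst, one_smul]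
  refine notMem_interior_of_forall_le hf fun y hy => ?_
  rw [hfx, ← sub_nonneg, ← map_sub]
  exact hfΩ y hy

theorem IsSide.forall_areaForm_nonneg_or_forall_areaForm_nonpos {Ω : Set (ℝ × ℝ)}
    (hconv : Convex ℝ Ω) (hint : (interior Ω).Nonempty) {v a : ℝ × ℝ} (h : IsSide Ω v a) :
    (∀ y ∈ Ω, 0 ≤ areaForm (a - v) (y - v)) ∨ ∀ y ∈ Ω, areaForm (a - v) (y - v) ≤ 0 := by
  obtain ⟨-, hv, ha, hfrontier⟩ := h
  obtain ⟨f, hf⟩ := geometric_hahn_banach_open_point hconv.interior isOpen_interior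
    (hfrontier (midpoint_mem_segment v a)).2
  have hfΩ : ∀ y ∈ Ω, f y ≤ f (midpoint ℝ v a) := fun y hy => by
    have hy' : y ∈ closure (interior Ω) := by
      rw [hconv.closure_interior_eq_closure_of_nonempty_interior hint]
      exact subset_closure hy
    exact closure_minimal (fun z hz => (hf z hz).le)
      (isClosed_le f.continuous continuous_const) hy'
  have hmid : f (midpoint ℝ v a) = (f v + f a) / 2 := by
    rw [midpoint_eq_smul_add, map_smul, map_add, smul_eq_mul, invOf_eq_inv, inv_mul_eq_div]
  have hfv := hfΩ v hv.1
  have hfa := hfΩ a ha.1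
  obtain ⟨z, hz⟩ := hint
  have hfz : f (z - v) < 0 := by rw [map_sub]; linarith [hf z hz]
  have hfy : ∀ y ∈ Ω, f (y - v) ≤ 0 := fun y hy => by rw [map_sub]; linarith [hfΩ y hy]
  have key : ∀ y,
      areaForm (a - v) (z - v) * f (y - v) = areaForm (a - v) (y - v) * f (z - v) := fun y => by
    have hfav : f (a - v) = 0 := by rw [map_sub]; linarith
    simpa [hfav] using congrArg f (areaForm_smul_eq_add (a - v) (z - v) (y - v))
  rcases le_total 0 (areaForm (a - v) (z - v)) with hzpos | hzneg
  · refine Or.inl fun y hy => nonneg_of_mul_nonpos_left ?_ hfz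
    exact key y ▸ mul_nonpos_of_nonneg_of_nonpos hzpos (hfy y hy)
  · refine Or.inr fun y hy => nonpos_of_mul_nonneg_left ?_ hfz
    exact key y ▸ mul_nonneg_of_nonpos_of_nonpos hzneg (hfy y hy)

theorem convexHull_extremePoints_of_finite {F : Type*} [AddCommGroup F] [Module ℝ F]
    [TopologicalSpace F] [T2Space F] [IsTopologicalAddGroup F] [ContinuousSMul ℝ F]
    [LocallyConvexSpace ℝ F] {s : Set F} (hcomp : IsCompact s) (hconv : Convex ℝ s)
    (hfin : (s.extremePoints ℝ).Finite) : convexHull ℝ (s.extremePoints ℝ) = s := by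
  rw [← (hfin.isClosed_convexHull ℝ).closure_eq, closure_convexHull_extremePoints hcomp hconv]

theorem nonempty_extremePoints_sdiff_singleton {Ω : Set (ℝ × ℝ)} (hcomp : IsCompact Ω)
    (hconv : Convex ℝ Ω) (hint : (interior Ω).Nonempty) (hfin : (Ω.extremePoints ℝ).Finite)
    (v : ℝ × ℝ) : (Ω.extremePoints ℝ \ {v}).Nonempty := by
  rw [Set.nonempty_iff_ne_empty, Ne, Set.sdiff_eq_empty]
  intro hsub
  have hΩv : Ω ⊆ {v} := convexHull_extremePoints_of_finite hcomp hconv hfin ▸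
    convexHull_min hsub (convex_singleton v)
  obtain ⟨x, hx⟩ := hint.mono (interior_mono hΩv)
  simp [interior_singleton] at hx

theorem exists_forall_pos_of_mem_extremePoints {Ω : Set (ℝ × ℝ)} (hconv : Convex ℝ Ω)
    (hfin : (Ω.extremePoints ℝ).Finite) {v : ℝ × ℝ} (hv : v ∈ Ω.extremePoints ℝ) :
    ∃ g : (ℝ × ℝ) →ₗ[ℝ] ℝ, ∀ y ∈ Ω.extremePoints ℝ \ {v}, 0 < g (y - v) := by
  have hv' : v ∉ convexHull ℝ (Ω.extremePoints ℝ \ {v}) := fun h =>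
    (convexHull_min (Set.sdiff_subset_sdiff_left extremePoints_subset)
      (hconv.mem_extremePoints_iff_convex_sdiff.mp hv).2 h).2 rfl
  obtain ⟨g, u, hgv, hgu⟩ := geometric_hahn_banach_point_closed (convex_convexHull ℝ _)
    ((hfin.subset Set.sdiff_subset).isClosed_convexHull ℝ) hv'
  refine ⟨g.toLinearMap, fun y hy => ?_⟩
  rw [map_sub, sub_pos]
  exact hgv.trans (hgu y (subset_convexHull ℝ _ hy))

theorem isSide_of_forall_mem_extremePoints {Ω : Set (ℝ × ℝ)} (hcomp : IsCompact Ω)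
    (hconv : Convex ℝ Ω) (hfin : (Ω.extremePoints ℝ).Finite) {v a : ℝ × ℝ}
    (hv : v ∈ Ω.extremePoints ℝ) (ha : a ∈ Ω.extremePoints ℝ \ {v}) {f : (ℝ × ℝ) →ₗ[ℝ] ℝ}
    (hf : f ≠ 0) (hfa : f (a - v) = 0) (hfΩ : ∀ y ∈ Ω.extremePoints ℝ \ {v}, 0 ≤ f (y - v)) :
    IsSide Ω v a ∧ ∀ y ∈ Ω, 0 ≤ f (y - v) := by
  have hfΩ' : ∀ y ∈ Ω, 0 ≤ f (y - v) := by
    have hsub : Ω.extremePoints ℝ ⊆ {y | f v ≤ f y} := fun y hy => by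
      rw [Set.mem_ofPred_eq, ← sub_nonneg, ← map_sub]
      rcases eq_or_ne y v with rfl | hyv
      · rw [sub_self, map_zero]
      · exact hfΩ y ⟨hy, hyv⟩
    have hΩ := convexHull_min hsub (convex_halfSpace_ge f.isLinear _)
    rw [convexHull_extremePoints_of_finite hcomp hconv hfin] at hΩ
    intro y hy
    rw [map_sub, sub_nonneg]
    exact hΩ hy
  exact ⟨isSide_of_forall_le hconv hv ha.1 (Ne.symm ha.2) hf hfa hfΩ', hfΩ'⟩

theorem exists_isSide_areaForm_nonneg_and_exists_isSide_areaForm_nonpos {Ω : Set (ℝ × ℝ)}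
    (hcomp : IsCompact Ω) (hconv : Convex ℝ Ω) (hint : (interior Ω).Nonempty)
    (hfin : (Ω.extremePoints ℝ).Finite) {v : ℝ × ℝ} (hv : v ∈ Ω.extremePoints ℝ) :
    (∃ a, IsSide Ω v a ∧ ∀ y ∈ Ω, 0 ≤ areaForm (a - v) (y - v)) ∧
      ∃ b, IsSide Ω v b ∧ ∀ y ∈ Ω, areaForm (b - v) (y - v) ≤ 0 := by
  obtain ⟨g, hg⟩ := exists_forall_pos_of_mem_extremePoints hconv hfin hv
  obtain ⟨⟨-, ⟨a, ha, rfl⟩, hmin⟩, -, ⟨b, hb, rfl⟩, hmax⟩ :=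
    exists_forall_areaForm_nonneg_and_exists_forall_areaForm_nonpos
      ((hfin.subset Set.sdiff_subset).image (· - v))
      ((nonempty_extremePoints_sdiff_singleton hcomp hconv hint hfin v).image _) g
      (Set.forall_mem_image.mpr hg)
  rw [Set.forall_mem_image] at hmin hmax
  refine ⟨⟨a, isSide_of_forall_mem_extremePoints hcomp hconv hfin hv ha
    (areaForm_ne_zero (sub_ne_zero.mpr ha.2)) (areaForm_self _) fun y hy => hmin hy⟩, b, ?_⟩
  have hside := isSide_of_forall_mem_extremePoints hcomp hconv hfin hv hb
    (f := -areaForm (b - v)) (neg_ne_zero.mpr (areaForm_ne_zero (sub_ne_zero.mpr hb.2)))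
    (by rw [LinearMap.neg_apply, areaForm_self, neg_zero])
    fun y hy => neg_nonneg.mpr (hmax hy)
  exact hside.imp_right fun h y hy => neg_nonneg.mp (h y hy)

theorem exists_setOf_isSide_eq_pair {Ω : Set (ℝ × ℝ)} (hcomp : IsCompact Ω)
    (hconv : Convex ℝ Ω) (hint : (interior Ω).Nonempty) (hfin : (Ω.extremePoints ℝ).Finite)
    {v : ℝ × ℝ} (hv : v ∈ Ω.extremePoints ℝ) :
    ∃ a b, a ≠ b ∧ {c | IsSide Ω v c} = {a, b} := by
  obtain ⟨⟨a, ha, hnonneg⟩, b, hb, hnonpos⟩ :=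
    exists_isSide_areaForm_nonneg_and_exists_isSide_areaForm_nonpos hcomp hconv hint hfin hv
  have eq_of_areaForm_eq_zero {a c : ℝ × ℝ} (ha : IsSide Ω v a) (hc : IsSide Ω v c)
      (h : areaForm (a - v) (c - v) = 0) : c = a :=
    eq_of_mem_extremePoints_of_areaForm_eq_zero hv ha.2.2.1 hc.2.2.1 ha.1 hc.1 h
  refine ⟨a, b, ?_, Set.ext fun c => ⟨fun hc => ?_, ?_⟩⟩
  · rintro rfl
    obtain ⟨x, hx⟩ := hint
    have hzero : ∀ y ∈ Ω, areaForm (a - v) (y - v) = 0 := fun y hy =>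
      le_antisymm (hnonpos y hy) (hnonneg y hy)
    refine notMem_interior_of_forall_le (areaForm_ne_zero (sub_ne_zero.mpr ha.1.symm))
      (fun y hy => le_of_eq ?_) hx
    rw [← sub_left_inj (a := areaForm (a - v) v), ← map_sub, ← map_sub, hzero y hy,
      hzero x (interior_subset hx)]
  · rcases hc.forall_areaForm_nonneg_or_forall_areaForm_nonpos hconv hint with h | h
    · refine Or.inl (eq_of_areaForm_eq_zero ha hc (le_antisymm ?_ (hnonneg c hc.2.2.1.1)))
      exact neg_nonneg.mp ((neg_areaForm _ _).symm ▸ h a ha.2.2.1.1)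
    · refine Or.inr (eq_of_areaForm_eq_zero hb hc (le_antisymm (hnonpos c hc.2.2.1.1) ?_))
      exact neg_nonpos.mp ((neg_areaForm _ _).symm ▸ h b hb.2.2.1.1)
  · rintro (rfl | rfl)
    exacts [ha, hb]

theorem not_segment_subset_pair {a b : ℝ × ℝ} (hab : a ≠ b) : ¬ segment ℝ a b ⊆ {a, b} := by
  intro h
  rcases h (midpoint_mem_segment a b) with hm | hm
  · exact hab ((midpoint_eq_left_iff ℝ).mp hm)
  · exact hab ((midpoint_eq_right_iff ℝ).mp hm)

theorem Planar.edgeSet {E : Finset Seg} (hE : Planar E) (hne : ∀ e ∈ E, e.1 ≠ e.2) :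
    EdgeSet E := by
  refine fun e he => ⟨hne e he, fun hswap => not_segment_subset_pair (hne e he) fun x hx => ?_⟩
  exact (hE e he _ hswap (fun h => hne e he (congrArg Prod.fst h))
    ⟨hx, (segment_symm ℝ e.1 e.2).subset hx⟩).1

theorem balSum_union {E E' : Finset Seg} (h : Disjoint E E') (m : Seg → ℕ) (v : ℝ × ℝ) :
    balSum (E ∪ E') m v = balSum E m v + balSum E' m v := by
  classical
  rw [balSum, Finset.filter_union, Finset.sum_union (Finset.disjoint_filter_filter h)]
  rfl

theorem balSum_congr {E : Finset Seg} {m m' : Seg → ℕ} (h : ∀ e ∈ E, m e = m' e) (v : ℝ × ℝ) :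
    balSum E m v = balSum E m' v :=
  Finset.sum_congr rfl fun e he => by rw [h e (Finset.mem_of_mem_filter e he)]

theorem outDir_left {e : Seg} {l : ℤ × ℤ} (h : PrimOut (e.2 - e.1) l) : outDir e.1 e = l := by
  rw [outDir, if_pos rfl, h.prim_eq]

theorem outDir_right {e : Seg} {l : ℤ × ℤ} (h : PrimOut (e.2 - e.1) l) : outDir e.2 e = -l := by
  rw [outDir, if_neg (sub_ne_zero.mp h.ne_zero).symm, ← neg_sub, h.neg.prim_eq]

theorem ite_outDir_eq_sub {e : Seg} {l : ℤ × ℤ} (h : PrimOut (e.2 - e.1) l) (n : ℤ)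
    (v : ℝ × ℝ) :
    (if e.1 = v ∨ e.2 = v then n • outDir v e else 0) =
      (if e.1 = v then n • l else 0) - if e.2 = v then n • l else 0 := by
  have hne : e.2 ≠ e.1 := sub_ne_zero.mp h.ne_zero
  by_cases h₁ : e.1 = v
  · subst h₁
    rw [if_pos (Or.inl rfl), if_pos rfl, if_neg hne, sub_zero, outDir_left h]
  · by_cases h₂ : e.2 = v
    · subst h₂
      rw [if_pos (Or.inr rfl), if_neg hne.symm, if_pos rfl, zero_sub, outDir_right h, smul_neg]
    · rw [if_neg (not_or.mpr ⟨h₁, h₂⟩), if_neg h₁, if_neg h₂, sub_zero]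

/-- The parametrization `t ↦ r.1 + t • r.2` of the line spanned by the ray `r`, which sends `[0, ∞)`
onto the ray. -/
noncomputable def rayMap (r : (ℝ × ℝ) × (ℤ × ℤ)) : ℝ →ᵃ[ℝ] ℝ × ℝ :=
  AffineMap.lineMap r.1 (r.1 + toR r.2)

section RayMap

variable {r : (ℝ × ℝ) × (ℤ × ℤ)}

theorem rayMap_apply (t : ℝ) : rayMap r t = r.1 + t • toR r.2 := by
  rw [rayMap, AffineMap.lineMap_apply_module', add_sub_cancel_left, add_comm]

theorem rayMap_zero : rayMap r 0 = r.1 := by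
  rw [rayMap_apply, zero_smul, add_zero]

theorem raySet_eq_image : raySet r = rayMap r '' Set.Ici 0 := by
  ext x
  simp only [raySet, Set.mem_ofPred_eq, Set.mem_image, Set.mem_Ici, rayMap_apply, eq_comm]

theorem raySet_rayMap (s : ℝ) : raySet (rayMap r s, r.2) = rayMap r '' Set.Ici s := by
  ext x
  constructor
  · rintro ⟨t, ht, rfl⟩
    exact ⟨s + t, le_add_of_nonneg_right ht, by rw [rayMap_apply, rayMap_apply]; module⟩
  · rintro ⟨t, ht, rfl⟩
    exact ⟨t - s, sub_nonneg.mpr ht, by rw [rayMap_apply, rayMap_apply]; module⟩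

theorem rayMap_injective (hr : Int.gcd r.2.1 r.2.2 = 1) : Function.Injective (rayMap r) :=
  AffineMap.lineMap_injective ℝ (by simpa using toR_ne_zero hr)

theorem segment_rayMap {s t : ℝ} (hst : s ≤ t) :
    segment ℝ (rayMap r s) (rayMap r t) = rayMap r '' Set.Icc s t := by
  rw [← segment_eq_Icc hst, image_segment]

theorem primOut_rayMap_sub_rayMap (hr : Int.gcd r.2.1 r.2.2 = 1) {s t : ℝ} (hst : s < t) :
    PrimOut (rayMap r t - rayMap r s) r.2 :=
  ⟨hr, t - s, sub_pos.mpr hst, by rw [rayMap_apply, rayMap_apply]; module⟩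

theorem not_raySet_subset_singleton (hr : Int.gcd r.2.1 r.2.2 = 1) : ¬ raySet r ⊆ {r.1} := by
  intro h
  have h1 : rayMap r 1 = r.1 := h (raySet_eq_image ▸ Set.mem_image_of_mem _ (zero_le_one (α := ℝ)))
  exact one_ne_zero (rayMap_injective hr (h1.trans rayMap_zero.symm))

end RayMap

/-- A ray together with finitely many marked points on it, the base point among them, recorded by
their increasing parameters. The marked points cut the ray into `len` segments and a smaller ray. -/
structure SubdividedRay where
  ray : (ℝ × ℝ) × (ℤ × ℤ)
  gcd_dir : Int.gcd ray.2.1 ray.2.2 = 1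
  len : ℕ
  param : Fin (len + 1) → ℝ
  strictMono_param : StrictMono param
  param_zero : param 0 = 0

namespace SubdividedRay

variable (R : SubdividedRay)

/-- The marked points of a subdivided ray, in order. -/
noncomputable def vertex (k : Fin (R.len + 1)) : ℝ × ℝ := rayMap R.ray (R.param k)

/-- The segments of a subdivided ray, oriented along the ray. -/
noncomputable def segEdge (k : Fin R.len) : Seg := (R.vertex k.castSucc, R.vertex k.succ)

/-- The unbounded edge of a subdivided ray. -/
noncomputable def rayEdge : (ℝ × ℝ) × (ℤ × ℤ) := (R.vertex (Fin.last R.len), R.ray.2)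

/-- The edge of a subdivided ray starting at its `k`-th vertex, as a point set: the segments and the
unbounded edge treated uniformly. -/
def cell (k : Fin (R.len + 1)) : Set (ℝ × ℝ) :=
  rayMap R.ray '' {u | R.param k ≤ u ∧ ∀ k', k < k' → u ≤ R.param k'}

theorem exists_subset_range_vertex {r : (ℝ × ℝ) × (ℤ × ℤ)} (hr : Int.gcd r.2.1 r.2.2 = 1)
    {S : Set (ℝ × ℝ)} (hS : S.Finite) (hSr : S ⊆ raySet r) :
    ∃ R : SubdividedRay, R.ray = r ∧ S ⊆ Set.range R.vertex := by
  classical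
  lift S to Finset (ℝ × ℝ) using hS
  rw [raySet_eq_image] at hSr
  obtain ⟨P, hP, rfl⟩ := Finset.subset_set_image_iff.mp hSr
  obtain ⟨n, hn⟩ := Nat.exists_eq_succ_of_ne_zero (Finset.insert_nonempty 0 P).card_ne_zero
  let param := (insert 0 P).orderEmbOfFin hn
  have param_zero : param 0 = 0 := by
    refine (Finset.orderEmbOfFin_zero hn n.succ_pos).trans ((Finset.min'_eq_iff _ _ _).mpr ?_)
    exact ⟨Finset.mem_insert_self 0 P, (Finset.forall_mem_insert _ _ _).mpr ⟨le_rfl, hP⟩⟩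
  refine ⟨⟨r, hr, n, param, param.strictMono, param_zero⟩, rfl, ?_⟩
  rw [Finset.coe_image]
  rintro - ⟨u, hu, rfl⟩
  obtain ⟨k, hk⟩ := (Finset.range_orderEmbOfFin _ hn).symm.subset (Finset.mem_insert_of_mem hu)
  exact ⟨k, congrArg _ hk⟩

variable {R}

theorem vertex_zero : R.vertex 0 = R.ray.1 := by
  rw [vertex, R.param_zero, rayMap_zero]

theorem cell_castSucc (k : Fin R.len) : R.cell k.castSucc = seg (R.segEdge k) := by
  have hmono := R.strictMono_param.monotone
  rw [seg, segEdge, vertex, vertex, segment_rayMap (hmono k.castSucc_le_succ), cell]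
  congr 1
  ext u
  refine and_congr_right fun _ => ⟨fun h => h _ k.castSucc_lt_succ, fun h k' hk' => ?_⟩
  exact h.trans (hmono (Fin.castSucc_lt_iff_succ_le.mp hk'))

theorem cell_last : R.cell (Fin.last R.len) = raySet R.rayEdge := by
  rw [rayEdge, vertex, raySet_rayMap, cell]
  congr 1
  ext u
  exact and_iff_left fun k' hk' => absurd hk' (Fin.le_last k').not_gt

theorem cell_subset_raySet (k : Fin (R.len + 1)) : R.cell k ⊆ raySet R.ray := by
  rw [raySet_eq_image]
  refine Set.image_mono fun u hu => ?_
  exact (R.param_zero.symm.le.trans (R.strictMono_param.monotone (Fin.zero_le k))).trans hu.1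

theorem iUnion_cell : ⋃ k, R.cell k = raySet R.ray := by
  refine (Set.iUnion_subset cell_subset_raySet).antisymm ?_
  rw [raySet_eq_image]
  rintro - ⟨u, hu, rfl⟩
  obtain ⟨k, hk, hmax⟩ := Finset.exists_max_image (Finset.univ.filter (R.param · ≤ u)) id
    ⟨0, by simpa [R.param_zero] using hu⟩
  rw [Finset.mem_filter_univ] at hk
  refine Set.mem_iUnion_of_mem k ⟨u, ⟨hk, fun k' hk' => ?_⟩, rfl⟩
  by_contra! hlt
  exact hk'.not_ge (hmax k' ((Finset.mem_filter_univ k').mpr hlt.le))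

theorem cell_inter_cell_subset {k k' : Fin (R.len + 1)} (hk : k ≠ k') :
    R.cell k ∩ R.cell k' ⊆ Set.range R.vertex := by
  wlog hlt : k < k' generalizing k k'
  · rw [Set.inter_comm]
    exact this hk.symm (hk.symm.lt_of_le (not_lt.mp hlt))
  rintro - ⟨⟨u, hu, rfl⟩, u', hu', huu'⟩
  have hueq : u' = u := rayMap_injective R.gcd_dir huu'
  exact ⟨k', congrArg _ ((hueq ▸ hu'.1).antisymm (hu.2 k' hlt))⟩

theorem range_vertex_inter_segEdge_subset (k : Fin R.len) :
    Set.range R.vertex ∩ seg (R.segEdge k) ⊆ {(R.segEdge k).1, (R.segEdge k).2} := by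
  rintro - ⟨⟨k', rfl⟩, hmem⟩
  rw [← cell_castSucc] at hmem
  obtain ⟨u, ⟨hle, hge⟩, hu⟩ := hmem
  obtain rfl : u = R.param k' := rayMap_injective R.gcd_dir hu
  rcases (R.strictMono_param.le_iff_le.mp hle).eq_or_lt with rfl | hlt
  · exact Or.inl rfl
  · have hle' := R.strictMono_param.le_iff_le.mp (hge _ k.castSucc_lt_succ)
    exact Or.inr (congrArg _ (hle'.antisymm (Fin.castSucc_lt_iff_succ_le.mp hlt)))

theorem range_vertex_inter_rayEdge_subset :
    Set.range R.vertex ∩ raySet R.rayEdge ⊆ {R.rayEdge.1} := by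
  rintro - ⟨⟨k', rfl⟩, hmem⟩
  rw [← cell_last] at hmem
  obtain ⟨u, ⟨hle, -⟩, hu⟩ := hmem
  obtain rfl : u = R.param k' := rayMap_injective R.gcd_dir hu
  exact congrArg _ ((Fin.le_last k').antisymm (R.strictMono_param.le_iff_le.mp hle))

theorem primOut_segEdge (k : Fin R.len) : PrimOut ((R.segEdge k).2 - (R.segEdge k).1) R.ray.2 :=
  primOut_rayMap_sub_rayMap R.gcd_dir (R.strictMono_param k.castSucc_lt_succ)

theorem segEdge_fst_ne_snd (k : Fin R.len) : (R.segEdge k).1 ≠ (R.segEdge k).2 :=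
  (sub_ne_zero.mp (primOut_segEdge k).ne_zero).symm

theorem sum_segEdge_add_rayEdge (n : ℤ) (v : ℝ × ℝ) :
    (∑ k, if (R.segEdge k).1 = v ∨ (R.segEdge k).2 = v then n • outDir v (R.segEdge k) else 0) +
      (if R.rayEdge.1 = v then n • R.ray.2 else 0) = if R.ray.1 = v then n • R.ray.2 else 0 := by
  let G (k : Fin (R.len + 1)) : ℤ × ℤ := if R.vertex k = v then n • R.ray.2 else 0
  calc _ = ∑ k, (G (Fin.castSucc k) - G k.succ) + G (Fin.last R.len) := by
        congr 1
        exact Finset.sum_congr rfl fun k _ => ite_outDir_eq_sub (primOut_segEdge k) n v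
    _ = G 0 := by
        rw [Finset.sum_sub_distrib, sub_add_eq_add_sub, ← Fin.sum_univ_castSucc,
          Fin.sum_univ_succ, add_sub_cancel_right]
    _ = _ := by simp only [G, vertex_zero]

end SubdividedRay

/-- The common points of any two of the subdivided rays `R i` are marked on both, and these rays
meet the graph `E` only in their base points, at endpoints of edges of `E`. Hence the graph and the
cells of the rays together form a planar graph. -/
structure Superposable {ι : Type*} (E : Finset Seg) (R : ι → SubdividedRay) : Prop where
  raySet_inter_raySet_subset ⦃i j : ι⦄ (hij : i ≠ j) :
    raySet (R i).ray ∩ raySet (R j).ray ⊆ Set.range (R i).vertex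
  seg_inter_raySet_subset ⦃e : Seg⦄ (he : e ∈ E) (i : ι) :
    seg e ∩ raySet (R i).ray ⊆ ({e.1, e.2} : Set (ℝ × ℝ)) ∩ {(R i).ray.1}

theorem exists_superposable {ι : Type*} [Finite ι] {E : Finset Seg}
    {r : ι → (ℝ × ℝ) × (ℤ × ℤ)} (hgcd : ∀ i, Int.gcd (r i).2.1 (r i).2.2 = 1)
    (hfin : ∀ i j, i ≠ j → (raySet (r i) ∩ raySet (r j)).Finite)
    (hE : ∀ e ∈ E, ∀ i, seg e ∩ raySet (r i) ⊆ ({e.1, e.2} : Set (ℝ × ℝ)) ∩ {(r i).1}) :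
    ∃ R : ι → SubdividedRay, (∀ i, (R i).ray = r i) ∧ Superposable E R := by
  choose R hR hvertex using fun i =>
    SubdividedRay.exists_subset_range_vertex (hgcd i)
      (S := ⋃ j ∈ {j | i ≠ j}, raySet (r i) ∩ raySet (r j))
      ((Set.toFinite _).biUnion (hfin i)) (Set.iUnion₂_subset fun _ _ => Set.inter_subset_left)
  refine ⟨R, hR, fun i j hij => ?_, fun e he i => hR i ▸ hE e he i⟩
  rw [hR, hR]
  exact (Set.subset_biUnion_of_mem (u := fun j => raySet (r i) ∩ raySet (r j)) hij).trans
    (hvertex i)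

section Superpose

variable {ι : Type*} {E : Finset Seg} {R : ι → SubdividedRay}

/-- All segments of a family of subdivided rays. -/
noncomputable def segEdges (R : ι → SubdividedRay) (p : Σ i, Fin (R i).len) : Seg :=
  (R p.1).segEdge p.2

/-- The unbounded edges of a family of subdivided rays. -/
noncomputable def rayEdges (R : ι → SubdividedRay) (i : ι) : (ℝ × ℝ) × (ℤ × ℤ) :=
  (R i).rayEdge

namespace Superposable

theorem cell_inter_cell_subset (h : Superposable E R) {p q : Σ i, Fin ((R i).len + 1)}
    (hpq : p ≠ q) :
    (R p.1).cell p.2 ∩ (R q.1).cell q.2 ⊆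
      Set.range (R p.1).vertex ∩ Set.range (R q.1).vertex := by
  obtain ⟨i, k⟩ := p
  obtain ⟨j, k'⟩ := q
  rcases eq_or_ne i j with rfl | hij
  · have hk : k ≠ k' := fun hk => hpq (hk ▸ rfl)
    rw [Set.inter_self]
    exact SubdividedRay.cell_inter_cell_subset hk
  · rintro x ⟨hx, hx'⟩
    have hxi := SubdividedRay.cell_subset_raySet k hx
    have hxj := SubdividedRay.cell_subset_raySet k' hx'
    exact ⟨h.raySet_inter_raySet_subset hij ⟨hxi, hxj⟩,
      h.raySet_inter_raySet_subset hij.symm ⟨hxj, hxi⟩⟩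

theorem segEdges_inter_segEdges_subset (h : Superposable E R) {p q : Σ i, Fin (R i).len}
    (hpq : p ≠ q) :
    seg (segEdges R p) ∩ seg (segEdges R q) ⊆
      ({(segEdges R p).1, (segEdges R p).2} : Set (ℝ × ℝ)) ∩
        {(segEdges R q).1, (segEdges R q).2} := by
  rintro x ⟨hx, hx'⟩
  have hne := (Function.Injective.sigma_map (β₂ := fun i => Fin ((R i).len + 1))
    Function.injective_id fun i => Fin.castSucc_injective (R i).len).ne hpq
  obtain ⟨hv, hv'⟩ := h.cell_inter_cell_subset hne
    ⟨(SubdividedRay.cell_castSucc p.2).symm.subset hx,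
      (SubdividedRay.cell_castSucc q.2).symm.subset hx'⟩
  exact ⟨SubdividedRay.range_vertex_inter_segEdge_subset _ ⟨hv, hx⟩,
    SubdividedRay.range_vertex_inter_segEdge_subset _ ⟨hv', hx'⟩⟩

theorem segEdges_inter_rayEdges_subset (h : Superposable E R) (p : Σ i, Fin (R i).len) (j : ι) :
    seg (segEdges R p) ∩ raySet (rayEdges R j) ⊆
      ({(segEdges R p).1, (segEdges R p).2} : Set (ℝ × ℝ)) ∩ {(rayEdges R j).1} := by
  rintro x ⟨hx, hx'⟩
  have hne : (⟨p.1, p.2.castSucc⟩ : Σ i, Fin ((R i).len + 1)) ≠ ⟨j, Fin.last _⟩ := by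
    rintro heq
    obtain ⟨rfl, hlast⟩ := Sigma.mk.inj_iff.mp heq
    exact (Fin.castSucc_lt_last p.2).ne (eq_of_heq hlast)
  obtain ⟨hv, hv'⟩ := h.cell_inter_cell_subset hne
    ⟨(SubdividedRay.cell_castSucc p.2).symm.subset hx, SubdividedRay.cell_last.symm.subset hx'⟩
  exact ⟨SubdividedRay.range_vertex_inter_segEdge_subset _ ⟨hv, hx⟩,
    SubdividedRay.range_vertex_inter_rayEdge_subset ⟨hv', hx'⟩⟩

theorem rayEdges_inter_rayEdges_subset (h : Superposable E R) {i j : ι} (hij : i ≠ j) :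
    raySet (rayEdges R i) ∩ raySet (rayEdges R j) ⊆
      ({(rayEdges R i).1} : Set (ℝ × ℝ)) ∩ {(rayEdges R j).1} := by
  rintro x ⟨hx, hx'⟩
  have hne : (⟨i, Fin.last _⟩ : Σ i, Fin ((R i).len + 1)) ≠ ⟨j, Fin.last _⟩ :=
    fun heq => hij (congrArg Sigma.fst heq)
  obtain ⟨hv, hv'⟩ := h.cell_inter_cell_subset hne
    ⟨SubdividedRay.cell_last.symm.subset hx, SubdividedRay.cell_last.symm.subset hx'⟩
  exact ⟨SubdividedRay.range_vertex_inter_rayEdge_subset ⟨hv, hx⟩,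
    SubdividedRay.range_vertex_inter_rayEdge_subset ⟨hv', hx'⟩⟩

theorem seg_inter_segEdges_subset (h : Superposable E R) {e : Seg} (he : e ∈ E)
    (p : Σ i, Fin (R i).len) :
    seg e ∩ seg (segEdges R p) ⊆
      ({e.1, e.2} : Set (ℝ × ℝ)) ∩ {(segEdges R p).1, (segEdges R p).2} := by
  rintro x ⟨hx, hx'⟩
  have hx'' := SubdividedRay.cell_subset_raySet _
    ((SubdividedRay.cell_castSucc p.2).symm.subset hx')
  obtain ⟨hxe, hbase⟩ := h.seg_inter_raySet_subset he p.1 ⟨hx, hx''⟩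
  exact ⟨hxe, SubdividedRay.range_vertex_inter_segEdge_subset _
    ⟨⟨0, SubdividedRay.vertex_zero.trans hbase.symm⟩, hx'⟩⟩

theorem seg_inter_rayEdges_subset (h : Superposable E R) {e : Seg} (he : e ∈ E) (i : ι) :
    seg e ∩ raySet (rayEdges R i) ⊆ ({e.1, e.2} : Set (ℝ × ℝ)) ∩ {(rayEdges R i).1} := by
  rintro x ⟨hx, hx'⟩
  have hx'' := SubdividedRay.cell_subset_raySet _ (SubdividedRay.cell_last.symm.subset hx')
  obtain ⟨hxe, hbase⟩ := h.seg_inter_raySet_subset he i ⟨hx, hx''⟩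
  exact ⟨hxe, SubdividedRay.range_vertex_inter_rayEdge_subset
    ⟨⟨0, SubdividedRay.vertex_zero.trans hbase.symm⟩, hx'⟩⟩

theorem injective_segEdges (h : Superposable E R) : Function.Injective (segEdges R) := by
  intro p q hpq
  by_contra hne
  have hsub := h.segEdges_inter_segEdges_subset hne
  rw [← hpq, Set.inter_self, Set.inter_self] at hsub
  exact not_segment_subset_pair (SubdividedRay.segEdge_fst_ne_snd p.2) hsub

theorem injective_rayEdges (h : Superposable E R) : Function.Injective (rayEdges R) := by
  intro i j hij
  by_contra hne
  have hsub := h.rayEdges_inter_rayEdges_subset hne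
  rw [← hij, Set.inter_self, Set.inter_self] at hsub
  exact not_raySet_subset_singleton (r := rayEdges R i) (R i).gcd_dir hsub

theorem segEdges_notMem (h : Superposable E R) (hE : EdgeSet E) (p : Σ i, Fin (R i).len) :
    segEdges R p ∉ E := by
  intro hp
  have hsub : seg (segEdges R p) ⊆ {(R p.1).ray.1} := fun x hx =>
    (h.seg_inter_raySet_subset hp p.1 ⟨hx, SubdividedRay.cell_subset_raySet _
      ((SubdividedRay.cell_castSucc p.2).symm.subset hx)⟩).2
  exact (hE _ hp).1 ((hsub (left_mem_segment ℝ _ _)).trans (hsub (right_mem_segment ℝ _ _)).symm)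

end Superposable

variable [Fintype ι]

open Classical in
/-- The plane tropical curve data obtained by adding to the weighted graph `(E, m)` the cells of the
subdivided rays `R i`, all cells of `R i` having weight `w i`. -/
noncomputable def superpose (E : Finset Seg) (m : Seg → ℕ) (R : ι → SubdividedRay) (w : ι → ℕ) :
    PlaneTropData where
  segs := E ∪ Finset.univ.image (segEdges R)
  rays := Finset.univ.image (rayEdges R)
  msegs := Function.extend (segEdges R) (fun p => w p.1) m
  mrays := Function.extend (rayEdges R) w 0

variable {m : Seg → ℕ} {w : ι → ℕ}

theorem forall_mem_segs_superpose {P : Seg → Prop} :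
    (∀ e ∈ (superpose E m R w).segs, P e) ↔ (∀ e ∈ E, P e) ∧ ∀ p, P (segEdges R p) := by
  classical
  simp only [superpose, Finset.forall_mem_union, Finset.forall_mem_image, Finset.mem_univ,
    forall_const]

theorem forall_mem_rays_superpose {P : (ℝ × ℝ) × (ℤ × ℤ) → Prop} :
    (∀ r ∈ (superpose E m R w).rays, P r) ↔ ∀ i, P (rayEdges R i) := by
  simp only [superpose, Finset.forall_mem_image, Finset.mem_univ, forall_const]

theorem ptcSupp_superpose :
    ptcSupp (superpose E m R w) = gsupp E ∪ ⋃ i, raySet (R i).ray := by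
  have hcells (i : ι) : raySet (R i).ray =
      (⋃ k, seg ((R i).segEdge k)) ∪ raySet (R i).rayEdge := by
    rw [← SubdividedRay.iUnion_cell]
    ext x
    simp only [Set.mem_iUnion, Set.mem_union, Fin.exists_fin_succ']
    simp only [SubdividedRay.cell_castSucc, SubdividedRay.cell_last]
  simp only [ptcSupp, superpose, gsupp, Finset.set_biUnion_union, Finset.set_biUnion_finset_image,
    Finset.mem_univ, Set.iUnion_true, Set.iUnion_sigma, hcells, Set.iUnion_union_distrib,
    Set.union_assoc, segEdges, rayEdges]

theorem msegs_superpose_segEdges (h : Superposable E R) (p : Σ i, Fin (R i).len) :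
    (superpose E m R w).msegs (segEdges R p) = w p.1 :=
  h.injective_segEdges.extend_apply (fun p => w p.1) m p

theorem msegs_superpose_of_mem (h : Superposable E R) (hE : EdgeSet E) {e : Seg} (he : e ∈ E) :
    (superpose E m R w).msegs e = m e :=
  Function.extend_apply' (f := segEdges R) (fun p => w p.1) m e
    fun ⟨p, hp⟩ => h.segEdges_notMem hE p (hp ▸ he)

theorem mrays_superpose_rayEdges (h : Superposable E R) (i : ι) :
    (superpose E m R w).mrays (rayEdges R i) = w i :=
  h.injective_rayEdges.extend_apply w 0 i

theorem ptcBalSum_superpose (h : Superposable E R) (hE : EdgeSet E) (v : ℝ × ℝ) :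
    ptcBalSum (superpose E m R w) v =
      balSum E m v + ∑ i, if (R i).ray.1 = v then (w i : ℤ) • (R i).ray.2 else 0 := by
  have hdisj : Disjoint E (Finset.univ.image (segEdges R)) :=
    Finset.disjoint_right.mpr <| Finset.forall_mem_image.mpr fun p _ => h.segEdges_notMem hE p
  have hsegs : balSum (superpose E m R w).segs (superpose E m R w).msegs v =
      balSum E m v + ∑ p, if (segEdges R p).1 = v ∨ (segEdges R p).2 = v then
        (w p.1 : ℤ) • outDir v (segEdges R p) else 0 := by
    change balSum (E ∪ Finset.univ.image (segEdges R)) _ v = _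
    rw [balSum_union hdisj, balSum_congr fun e he => msegs_superpose_of_mem h hE he]
    congr 1
    rw [balSum, Finset.sum_filter, Finset.sum_image h.injective_segEdges.injOn]
    simp only [msegs_superpose_segEdges h]
  have hrays : ∑ r ∈ (superpose E m R w).rays with r.1 = v,
        ((superpose E m R w).mrays r : ℤ) • r.2 =
      ∑ i, if (rayEdges R i).1 = v then (w i : ℤ) • (R i).ray.2 else 0 := by
    change ∑ r ∈ Finset.univ.image (rayEdges R) with r.1 = v, _ = _
    rw [Finset.sum_filter, Finset.sum_image h.injective_rayEdges.injOn]
    simp only [mrays_superpose_rayEdges h]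
    rfl
  simp only [← SubdividedRay.sum_segEdge_add_rayEdge (R := R _)]
  rw [Finset.sum_add_distrib, ← add_assoc, ptcBalSum, hsegs, hrays, Fintype.sum_sigma]
  rfl

theorem isPlaneTropCurve_superpose (h : Superposable E R) (hE : EdgeSet E) (hplanar : Planar E)
    (hm : ∀ e ∈ E, 0 < m e) (hrat : ∀ e ∈ E, RatDir (e.2 - e.1)) (hw : ∀ i, 0 < w i)
    (hbal : ∀ v, ptcBalSum (superpose E m R w) v = 0) :
    IsPlaneTropCurve (superpose E m R w) := by
  have hplanar' : Planar (superpose E m R w).segs := by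
    simp only [Planar, forall_mem_segs_superpose]
    refine ⟨fun e he => ⟨hplanar e he, fun p _ => h.seg_inter_segEdges_subset he p⟩,
      fun p => ⟨fun e he _ => ?_, fun q hpq => ?_⟩⟩
    · rw [Set.inter_comm, Set.inter_comm {_, _}]
      exact h.seg_inter_segEdges_subset he p
    · exact h.segEdges_inter_segEdges_subset fun heq => hpq (heq ▸ rfl)
  refine ⟨hplanar'.edgeSet ?_, ?_, ?_, hplanar', ?_, ?_, fun v _ => hbal v⟩
  · exact forall_mem_segs_superpose.mpr
      ⟨fun e he => (hE e he).1, fun p => SubdividedRay.segEdge_fst_ne_snd p.2⟩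
  · refine forall_mem_segs_superpose.mpr ⟨fun e he => ?_, fun p => ?_⟩
    · rw [msegs_superpose_of_mem h hE he]
      exact ⟨hm e he, hrat e he⟩
    · rw [msegs_superpose_segEdges h]
      exact ⟨hw p.1, _, SubdividedRay.primOut_segEdge p.2⟩
  · refine forall_mem_rays_superpose.mpr fun i => ?_
    rw [mrays_superpose_rayEdges h]
    exact ⟨hw i, (R i).gcd_dir⟩
  · simp only [forall_mem_segs_superpose, forall_mem_rays_superpose]
    exact ⟨fun e he => h.seg_inter_rayEdges_subset he, h.segEdges_inter_rayEdges_subset⟩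
  · simp only [forall_mem_rays_superpose]
    exact fun i j hij => h.rayEdges_inter_rayEdges_subset fun heq => hij (heq ▸ rfl)

end Superpose

/-- The ray that extends the oriented side `p = (v, a)` of a polygon beyond its first endpoint `v`,
away from the polygon. -/
noncomputable def sideRay (p : Seg) : (ℝ × ℝ) × (ℤ × ℤ) := (p.1, -prim (p.2 - p.1))

theorem raySet_sideRay_subset_setOf_wbtw {p : Seg} (hp : RatDir (p.2 - p.1)) :
    raySet (sideRay p) ⊆ {x | Wbtw ℝ x p.1 p.2} := by
  obtain ⟨l, hl⟩ := hp
  obtain ⟨-, s, hs, hps⟩ := id hl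
  rintro - ⟨t, ht, rfl⟩
  rw [Set.mem_ofPred_eq, wbtw_iff_sameRay_vsub, vsub_eq_sub, vsub_eq_sub, sideRay, hl.prim_eq,
    toR_neg, smul_neg, ← sub_eq_add_neg, sub_sub_cancel, hps]
  exact ((SameRay.refl (toR l)).nonneg_smul_left ht).nonneg_smul_right hs.le

theorem gcd_sideRay {p : Seg} (hp : RatDir (p.2 - p.1)) :
    Int.gcd (sideRay p).2.1 (sideRay p).2.2 = 1 :=
  hp.primOut_prim.neg.1

section SideRay

variable {Ω : Set (ℝ × ℝ)}

theorem IsSide.raySet_sideRay_inter_subset {p : Seg} (h : IsSide Ω p.1 p.2)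
    (hp : RatDir (p.2 - p.1)) : raySet (sideRay p) ∩ Ω ⊆ {p.1} := fun _ ⟨hx, hxΩ⟩ =>
  (eq_or_eq_of_wbtw_of_mem_extremePoints h.2.1 hxΩ h.2.2.1.1
    (raySet_sideRay_subset_setOf_wbtw hp hx)).resolve_right h.1.symm

theorem IsSide.subsingleton_raySet_sideRay_inter_raySet_sideRay {p q : Seg}
    (hp : IsSide Ω p.1 p.2) (hq : IsSide Ω q.1 q.2) (hp' : RatDir (p.2 - p.1))
    (hq' : RatDir (q.2 - q.1)) (hpq : p ≠ q) :
    (raySet (sideRay p) ∩ raySet (sideRay q)).Subsingleton :=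
  (subsingleton_setOf_wbtw_inter_setOf_wbtw hp.2.1 hp.2.2.1 hq.2.1 hq.2.2.1 hp.1 hq.1 hpq).anti
    (Set.inter_subset_inter (raySet_sideRay_subset_setOf_wbtw hp')
      (raySet_sideRay_subset_setOf_wbtw hq'))

end SideRay

theorem balSum_of_not_isVert {E : Finset Seg} {v : ℝ × ℝ} (hv : ¬ IsVert E v) (m : Seg → ℕ) :
    balSum E m v = 0 :=
  Finset.sum_eq_zero fun e he => absurd ⟨e, Finset.mem_filter.mp he⟩ hv

theorem finite_setOf_isVert (E : Finset Seg) : {v | IsVert E v}.Finite := by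
  have hsub : {v | IsVert E v} ⊆ Prod.fst '' (E : Set Seg) ∪ Prod.snd '' (E : Set Seg) :=
    fun _ ⟨e, he, hv⟩ => hv.imp (⟨e, he, ·⟩) (⟨e, he, ·⟩)
  exact ((E.finite_toSet.image _).union (E.finite_toSet.image _)).subset hsub

theorem IsVert.mem_gsupp {E : Finset Seg} {v : ℝ × ℝ} (hv : IsVert E v) : v ∈ gsupp E := by
  obtain ⟨e, he, rfl | rfl⟩ := hv
  exacts [Set.mem_biUnion he (left_mem_segment ℝ _ _), Set.mem_biUnion he (right_mem_segment ℝ _ _)]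

namespace OmegaTropCurve

variable {Ω : Set (ℝ × ℝ)} {E : Finset Seg} {m : Seg → ℕ}

theorem seg_subset (hE : OmegaTropCurve Ω E m) {e : Seg} (he : e ∈ E) : seg e ⊆ Ω := by
  obtain ⟨-, -, -, -, hsub, -⟩ := hE
  exact (Set.subset_biUnion_of_mem (u := seg) he).trans hsub

theorem gsupp_inter_frontier (hE : OmegaTropCurve Ω E m) :
    gsupp E ∩ frontier Ω = Ω.extremePoints ℝ := by
  obtain ⟨-, -, -, -, -, hfrontier, -⟩ := hE
  exact hfrontier

theorem mem_pair_of_mem_extremePoints (hE : OmegaTropCurve Ω E m) {v : ℝ × ℝ}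
    (hv : v ∈ Ω.extremePoints ℝ) {e : Seg} (he : e ∈ E) (hve : v ∈ seg e) :
    v ∈ ({e.1, e.2} : Set (ℝ × ℝ)) :=
  (eq_or_eq_of_wbtw_of_mem_extremePoints hv (hE.seg_subset he (left_mem_segment ℝ _ _))
    (hE.seg_subset he (right_mem_segment ℝ _ _)) (mem_segment_iff_wbtw.mp hve)).imp Eq.symm Eq.symm

theorem isVert_of_mem_extremePoints (hE : OmegaTropCurve Ω E m) {v : ℝ × ℝ}
    (hv : v ∈ Ω.extremePoints ℝ) : IsVert E v := by
  obtain ⟨e, he, hve⟩ := Set.mem_iUnion₂.mp (hE.gsupp_inter_frontier.symm.subset hv).1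
  exact ⟨e, he, (hE.mem_pair_of_mem_extremePoints hv he hve).imp Eq.symm Eq.symm⟩

theorem finite_extremePoints (hE : OmegaTropCurve Ω E m) : (Ω.extremePoints ℝ).Finite :=
  (finite_setOf_isVert E).subset fun _ => hE.isVert_of_mem_extremePoints

theorem finite_isSide (hE : OmegaTropCurve Ω E m) : Finite {p : Seg // IsSide Ω p.1 p.2} :=
  ((hE.finite_extremePoints.prod hE.finite_extremePoints).subset
    fun _ hp => ⟨hp.2.1, hp.2.2.1⟩).to_subtype

theorem balSum_eq_zero (hE : OmegaTropCurve Ω E m) {v : ℝ × ℝ} (hv : v ∉ Ω.extremePoints ℝ) :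
    balSum E m v = 0 := by
  by_cases hvert : IsVert E v
  · have hfrontier : v ∉ frontier Ω := fun h =>
      hv (hE.gsupp_inter_frontier.subset ⟨hvert.mem_gsupp, h⟩)
    obtain ⟨-, -, -, -, hsub, -, hint, -⟩ := hE
    refine hint v hvert ?_
    rw [← self_sdiff_frontier]
    exact ⟨hsub hvert.mem_gsupp, hfrontier⟩
  · exact balSum_of_not_isVert hvert m

theorem exists_sideLabel_forall_balSum_eq (hE : OmegaTropCurve Ω E m) (hcomp : IsCompact Ω)
    (hconv : Convex ℝ Ω) (hint : (interior Ω).Nonempty) [Fintype {p : Seg // IsSide Ω p.1 p.2}] :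
    ∃ d, SideLabel Ω d ∧ ∀ v, balSum E m v =
      ∑ p : {p : Seg // IsSide Ω p.1 p.2},
        if p.1.1 = v then d p • prim (p.1.2 - p.1.1) else 0 := by
  have hE' := hE
  obtain ⟨-, -, -, -, -, -, -, d, hd, houter, -⟩ := hE'
  refine ⟨d, hd, fun v => ?_⟩
  by_cases hv : v ∈ Ω.extremePoints ℝ
  · obtain ⟨a, b, hab, hsides⟩ :=
      exists_setOf_isSide_eq_pair hcomp hconv hint hE.finite_extremePoints hv
    have ha : IsSide Ω v a := hsides.symm.subset (Or.inl rfl)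
    have hb : IsSide Ω v b := hsides.symm.subset (Or.inr rfl)
    have hfilter : (Finset.univ.filter fun p : {p : Seg // IsSide Ω p.1 p.2} => p.1.1 = v) =
        {⟨(v, a), ha⟩, ⟨(v, b), hb⟩} := by
      ext ⟨⟨v', c⟩, hc⟩
      simp only [Finset.mem_filter_univ, Finset.mem_insert, Finset.mem_singleton,
        Subtype.mk.injEq, Prod.mk.injEq, ← and_or_left]
      exact (and_iff_left_of_imp fun h => hsides.subset (h ▸ hc)).symm
    rw [houter v hv a b hab ha hb, ← Finset.sum_filter, hfilter, Finset.sum_pair]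
    simpa using hab
  · rw [hE.balSum_eq_zero hv]
    exact (Finset.sum_eq_zero fun p _ => if_neg fun h : p.1.1 = v => hv (h ▸ p.2.2.1)).symm

theorem seg_inter_raySet_sideRay_subset (hE : OmegaTropCurve Ω E m) {e : Seg} (he : e ∈ E)
    {p : Seg} (hp : IsSide Ω p.1 p.2) (hrat : RatDir (p.2 - p.1)) :
    seg e ∩ raySet (sideRay p) ⊆ ({e.1, e.2} : Set (ℝ × ℝ)) ∩ {p.1} := by
  rintro x ⟨hxe, hx⟩
  obtain rfl : x = p.1 := hp.raySet_sideRay_inter_subset hrat ⟨hx, hE.seg_subset he hxe⟩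
  exact ⟨hE.mem_pair_of_mem_extremePoints hp.2.1 he hxe, rfl⟩

theorem isPlaneTropCurve_superpose_sideRay (hE : OmegaTropCurve Ω E m)
    [Fintype {p : Seg // IsSide Ω p.1 p.2}] {R : {p : Seg // IsSide Ω p.1 p.2} → SubdividedRay}
    (hsup : Superposable E R) (hR : ∀ p, (R p).ray = sideRay p) {d : Seg → ℤ}
    (hd : SideLabel Ω d)
    (hbal : ∀ v, balSum E m v = ∑ p : {p : Seg // IsSide Ω p.1 p.2},
      if p.1.1 = v then d p • prim (p.1.2 - p.1.1) else 0) :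
    IsPlaneTropCurve (superpose E m R fun p => (d p).toNat) := by
  obtain ⟨hEdge, hplanar, hm, hrat, -⟩ := hE
  have hpos (p : {p : Seg // IsSide Ω p.1 p.2}) : 0 < d p := (hd _ _ p.2).1
  refine isPlaneTropCurve_superpose hsup hEdge hplanar hm hrat
    (fun p => Int.lt_toNat.mpr (hpos p)) fun v => ?_
  have hrays : ∀ p : {p : Seg // IsSide Ω p.1 p.2},
      (if (R p).ray.1 = v then ((d p).toNat : ℤ) • (R p).ray.2 else 0) =
        -if p.1.1 = v then d p • prim (p.1.2 - p.1.1) else 0 := fun p => by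
    rw [Int.toNat_of_nonneg (hpos p).le, hR, neg_ite, neg_zero, ← smul_neg, sideRay]
  rw [ptcBalSum_superpose hsup hEdge, hbal, Finset.sum_congr rfl fun p _ => hrays p,
    Finset.sum_neg_distrib, add_neg_cancel]

theorem gsupp_union_iUnion_raySet_sideRay_inter (hE : OmegaTropCurve Ω E m)
    (hrat : ∀ a b, IsSide Ω a b → RatDir (b - a)) :
    (gsupp E ∪ ⋃ p : {p : Seg // IsSide Ω p.1 p.2}, raySet (sideRay p)) ∩ Ω = gsupp E := by
  have hrays : (⋃ p : {p : Seg // IsSide Ω p.1 p.2}, raySet (sideRay p)) ∩ Ω ⊆ gsupp E := by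
    rw [Set.iUnion_inter]
    refine Set.iUnion_subset fun p => ?_
    exact (p.2.raySet_sideRay_inter_subset (hrat _ _ p.2)).trans <| Set.singleton_subset_iff.mpr
      (hE.isVert_of_mem_extremePoints p.2.2.1).mem_gsupp
  obtain ⟨-, -, -, -, hsub, -⟩ := hE
  rw [Set.union_inter_distrib_right, Set.inter_eq_left.mpr hsub, Set.union_eq_left.mpr hrays]

end OmegaTropCurve

theorem IsLatticePolygon.isCompact {Ω : Set (ℝ × ℝ)} (hΩ : IsLatticePolygon Ω) :
    IsCompact Ω := by
  obtain ⟨⟨S, rfl⟩, -⟩ := hΩ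
  exact (S.finite_toSet.image toR).isCompact_convexHull ℝ

theorem IsLatticePolygon.convex {Ω : Set (ℝ × ℝ)} (hΩ : IsLatticePolygon Ω) : Convex ℝ Ω := by
  obtain ⟨⟨S, rfl⟩, -⟩ := hΩ
  exact convex_convexHull ℝ _

theorem IsLatticePolygon.ratDir {Ω : Set (ℝ × ℝ)} (hΩ : IsLatticePolygon Ω) {a b : ℝ × ℝ}
    (h : IsSide Ω a b) : RatDir (b - a) := by
  obtain ⟨⟨S, rfl⟩, -⟩ := hΩ
  obtain ⟨x, -, rfl⟩ := extremePoints_convexHull_subset h.2.1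
  obtain ⟨y, -, rfl⟩ := extremePoints_convexHull_subset h.2.2.1
  rw [← toR_sub]
  exact ratDir_toR (sub_ne_zero.mpr fun hyx => h.1 (congrArg toR hyx.symm))

theorem statement7_general {Ω : Set (ℝ × ℝ)} (hcomp : IsCompact Ω) (hconv : Convex ℝ Ω)
    (hint : (interior Ω).Nonempty) (hrat : ∀ a b, IsSide Ω a b → RatDir (b - a))
    {E : Finset Seg} {m : Seg → ℕ} (hE : OmegaTropCurve Ω E m) :
    ∃ C : PlaneTropData, ExtendsCurve Ω E m C := by
  have := hE.finite_isSide
  have := Fintype.ofFinite {p : Seg // IsSide Ω p.1 p.2}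
  obtain ⟨d, hd, hbal⟩ := hE.exists_sideLabel_forall_balSum_eq hcomp hconv hint
  have hside (p : {p : Seg // IsSide Ω p.1 p.2}) : RatDir (p.1.2 - p.1.1) := hrat _ _ p.2
  obtain ⟨R, hR, hsup⟩ := exists_superposable (E := E)
    (r := fun p : {p : Seg // IsSide Ω p.1 p.2} => sideRay p) (fun p => gcd_sideRay (hside p))
    (fun p q hpq => (p.2.subsingleton_raySet_sideRay_inter_raySet_sideRay q.2 (hside p) (hside q)
      (Subtype.coe_injective.ne hpq)).finite)
    (fun e he p => hE.seg_inter_raySet_sideRay_subset he p.2 (hside p))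
  have hEdge : EdgeSet E := hE.1
  refine ⟨superpose E m R fun p => (d p).toNat,
    hE.isPlaneTropCurve_superpose_sideRay hsup hR hd hbal, ?_, fun e he => Or.inl ⟨e, ?_⟩⟩
  · simp only [ptcSupp_superpose, hR]
    exact hE.gsupp_union_iUnion_raySet_sideRay_inter hrat
  · exact ⟨(forall_mem_segs_superpose.mp fun _ => id).1 e he, subset_rfl,
      msegs_superpose_of_mem hsup hEdge he⟩

/-- Every `Ω`-tropical curve is the intersection of `Ω` with a plane
tropical curve: there is a plane tropical curve `C'` whose support meets `Ω` exactly in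
the support of `C`, each edge of `C` lying inside an edge of `C'` of the same weight. -/
theorem statement7 (Ω : Set (ℝ × ℝ)) (hΩ : IsLatticePolygon Ω)
    (E : Finset Seg) (m : Seg → ℕ) (hE : OmegaTropCurve Ω E m) :
    ∃ C : PlaneTropData, ExtendsCurve Ω E m C :=
  statement7_general hΩ.isCompact hΩ.convex hΩ.2 (fun _ _ => hΩ.ratDir) hE
end
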